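/- arXiv:1804.06009 — 3 statements merged into one kernel-verified Lean document; each statement's English description precedes it below -/
import Mathlib

section
/- Let G be a connected graph with m edges containing an odd cycle C_{2k+1} = v_1v_2⋯v_{2k+1}v_1 such that G − E(C_{2k+1}) has exactly 2k+1 connected components, with G_i the component containing v_i and m_i = |E(G_i)|. Then for each cycle edge v_iv_{i+1} (indices mod 2k+1), (m_{v_i}(v_iv_{i+1}|G) − m_{v_{i+1}}(v_iv_{i+1}|G))² ≤ (m − 2k − 1 − m_{i+k+1})². -/
open scoped Classical
open Finset

noncomputable def eDist {V : Type*} (G : SimpleGraph V) (f : Sym2 V) (w : V) : ℕ :=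
  Sym2.lift ⟨fun a b => min (G.dist a w) (G.dist b w), fun _ _ => min_comm _ _⟩ f

noncomputable def mCloser {V : Type*} (G : SimpleGraph V) [Fintype V] (u v : V) : ℕ :=
  (G.edgeFinset.filter fun f => eDist G f u < eDist G f v).card

noncomputable def mEqui {V : Type*} (G : SimpleGraph V) [Fintype V] (u v : V) : ℕ :=
  (G.edgeFinset.filter fun f => eDist G f u = eDist G f v).card

/-- The edge revised Szeged index (each edge `uv` is counted once; the double sum over
ordered adjacent pairs counts it twice, whence the division by 2). -/
noncomputable def szRevE {V : Type*} (G : SimpleGraph V) [Fintype V] : ℚ :=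
  (∑ u : V, ∑ v : V, if G.Adj u v then
      ((mCloser G u v : ℚ) + (mEqui G u v : ℚ) / 2) *
        ((mCloser G v u : ℚ) + (mEqui G u v : ℚ) / 2)
    else 0) / 2

/-- The edges of `G` lying in the connected component `c`. -/
noncomputable def compEdges {V : Type*} (G : SimpleGraph V) [Fintype V]
    (c : G.ConnectedComponent) : Finset (Sym2 V) :=
  G.edgeFinset.filter fun f => ∀ x ∈ f, G.connectedComponentMk x = c

/-!
Call the cycle the core `C` of `G`, and the components left by deleting its edges the branches.
Since there are as many branches as core vertices, each branch meets the core in one vertex, so a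
walk from the branch at `u j` to `u b` has to reach `u j` inside that branch and then continue
along the core: `dist_G (x, u b) = dist_branch (x, u j) + dist_C (j, b)`. Hence the core edges
contribute to `m_{u a} - m_{u b}` what they contribute inside `C`, which is nothing if a symmetry
of `C` swaps `a` and `b`; and all edges of the branch at `u p` are equidistant from `u a` and `u b`
if `dist_C (p, a) = dist_C (p, b)`. Only the edges of the other branches are left to contribute.
All this holds for any graph `C` in place of the cycle. On an odd cycle, the reflection
`j ↦ 2i + 1 - j` swaps `i` and `i + 1` and fixes `i + k + 1`.
-/

section Distance

variable {V W : Type*} {G : SimpleGraph V} {H : SimpleGraph W}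

theorem dist_map_le (φ : G →g H) {x y : V} (h : G.Reachable x y) :
    H.dist (φ x) (φ y) ≤ G.dist x y := by
  obtain ⟨p, hp⟩ := h.exists_walk_length_eq_dist
  rw [← hp, ← p.length_map φ]
  exact SimpleGraph.dist_le _

theorem dist_map_iso (φ : G ≃g H) (x y : V) : H.dist (φ x) (φ y) = G.dist x y := by
  by_cases h : G.Reachable x y
  · have h' : H.Reachable (φ x) (φ y) := φ.reachable_iff.2 h
    refine (dist_map_le φ.toHom h).antisymm ?_
    simpa using dist_map_le φ.symm.toHom h'
  · rw [SimpleGraph.dist_eq_zero_of_not_reachable h,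
      SimpleGraph.dist_eq_zero_of_not_reachable (mt φ.reachable_iff.1 h)]

theorem eDist_map {f : V → W} (hf : ∀ x y, H.dist (f x) (f y) = G.dist x y) (e : Sym2 V) (w : V) :
    eDist H (e.map f) (f w) = eDist G e w := by
  induction e with
  | _ x y => simp [eDist, hf]

theorem mCloser_map_iso [Fintype V] [Fintype W] (φ : G ≃g H) (a b : V) :
    mCloser H (φ a) (φ b) = mCloser G a b := by
  have hedges : H.edgeFinset = G.edgeFinset.image (Sym2.map φ) := by
    ext e
    simp only [mem_image, SimpleGraph.mem_edgeFinset]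
    constructor
    · exact fun he ↦ ⟨e.map φ.symm, φ.symm.map_mem_edgeSet_iff.2 he, by simp [Sym2.map_map]⟩
    · rintro ⟨e, he, rfl⟩
      exact φ.map_mem_edgeSet_iff.2 he
  simp only [mCloser, hedges, filter_image, eDist_map (dist_map_iso φ),
    card_image_of_injective _ (Sym2.map.injective φ.injective)]

end Distance

theorem card_filter_lt_add_card_filter_gt_add_card_filter_eq {α β : Type*} [LinearOrder β]
    (s : Finset α) (f g : α → β) :
    #{x ∈ s | f x < g x} + #{x ∈ s | g x < f x} + #{x ∈ s | f x = g x} = #s := by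
  simp only [card_filter]
  rw [← sum_add_distrib, ← sum_add_distrib, card_eq_sum_ones]
  refine sum_congr rfl fun x _ ↦ ?_
  rcases lt_trichotomy (f x) (g x) with h | h | h <;>
    simp [h, not_lt_of_gt, ne_of_gt, ne_of_lt]

section Branches

variable {V ι : Type*} {G : SimpleGraph V} {C : SimpleGraph ι} (u : C →g G)

/-- The graph `G − E(C)`: what remains of `G` when the images of the edges of `C` are deleted. -/
def deleteImage : SimpleGraph V :=
  G.deleteEdges (Sym2.map u '' C.edgeSet)

/-- The component `G_i` of `G − E(C)` that contains the vertex `u i`. -/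
def branch (i : ι) : (deleteImage u).ConnectedComponent :=
  (deleteImage u).connectedComponentMk (u i)

variable {u}

theorem deleteImage_le : deleteImage u ≤ G :=
  G.deleteEdges_le _

theorem edgeSet_deleteImage :
    (deleteImage u).edgeSet = G.edgeSet \ (Sym2.map u '' C.edgeSet) :=
  G.edgeSet_deleteEdges _

theorem deleteImage_adj_or_exists {x y : V} (h : G.Adj x y) :
    (deleteImage u).Adj x y ∨ ∃ i j, C.Adj i j ∧ u i = x ∧ u j = y := by
  refine or_iff_not_imp_left.2 fun hxy ↦ ?_
  obtain ⟨e, he, hexy⟩ : s(x, y) ∈ Sym2.map u '' C.edgeSet := by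
    simpa [deleteImage, h] using hxy
  induction e with
  | _ i j =>
    rcases Sym2.eq_iff.1 hexy with ⟨hi, hj⟩ | ⟨hi, hj⟩
    · exact ⟨i, j, he, hi, hj⟩
    · exact ⟨j, i, SimpleGraph.Adj.symm he, hj, hi⟩

theorem branch_surjective [Nonempty ι] (hG : G.Preconnected) :
    Function.Surjective (branch u) := by
  have reach {x y : V} (p : G.Walk x y)
      (hy : ∃ j, branch u j = (deleteImage u).connectedComponentMk y) :
        ∃ j, branch u j = (deleteImage u).connectedComponentMk x := by
    induction p with
    | nil => exact hy
    | cons h _ ih =>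
      rcases deleteImage_adj_or_exists (u := u) h with hdel | ⟨i, _, -, rfl, -⟩
      · obtain ⟨j, hj⟩ := ih hy
        exact ⟨j, hj.trans (SimpleGraph.ConnectedComponent.eq.2 hdel.symm.reachable)⟩
      · exact ⟨i, rfl⟩
  refine SimpleGraph.ConnectedComponent.ind fun x ↦ ?_
  obtain ⟨j⟩ := ‹Nonempty ι›
  obtain ⟨p⟩ := hG x (u j)
  exact reach p ⟨j, rfl⟩

theorem injective_of_branch_injective (hu : Function.Injective (branch u)) :
    Function.Injective u :=
  fun _ _ h ↦ hu (congrArg (deleteImage u).connectedComponentMk h)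

theorem branch_injective_of_card_eq [Finite ι] [Nonempty ι] (hG : G.Preconnected)
    (hcard : Nat.card (deleteImage u).ConnectedComponent = Nat.card ι) :
    Function.Injective (branch u) :=
  ((branch_surjective hG).bijective_of_nat_card_le hcard.ge).1

theorem exists_walk_branch_walk_core (hu : Function.Injective (branch u)) {x y : V}
    (p : G.Walk x y) {b : ι} (hy : y = u b) :
    ∃ j, ∃ (q : (deleteImage u).Walk x (u j)) (r : C.Walk j b),
      q.length + r.length ≤ p.length := by
  induction p with
  | nil => subst hy; exact ⟨b, .nil, .nil, le_rfl⟩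
  | cons h p ih =>
    obtain ⟨j, q, r, hqr⟩ := ih hy
    rcases deleteImage_adj_or_exists (u := u) h with hdel | ⟨i, i', hC, rfl, rfl⟩
    · exact ⟨j, .cons hdel q, r, by simp only [SimpleGraph.Walk.length_cons]; lia⟩
    · obtain rfl : i' = j := hu (SimpleGraph.ConnectedComponent.eq.2 q.reachable)
      exact ⟨i, .nil, .cons hC r, by
        simp only [SimpleGraph.Walk.length_cons, SimpleGraph.Walk.length_nil]; lia⟩

theorem dist_eq_dist_branch_add_dist_core (hG : G.Connected) (hu : Function.Injective (branch u))
    {x : V} {j : ι} (hx : (deleteImage u).connectedComponentMk x = branch u j) (b : ι) :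
    G.dist x (u b) = (deleteImage u).dist x (u j) + C.dist j b := by
  have hxj : (deleteImage u).Reachable x (u j) := SimpleGraph.ConnectedComponent.eq.1 hx
  obtain ⟨p, hp⟩ := hG.exists_walk_length_eq_dist x (u b)
  obtain ⟨j', q, r, hqr⟩ := exists_walk_branch_walk_core hu p rfl
  obtain rfl : j' = j :=
    hu (SimpleGraph.ConnectedComponent.eq.2 (q.reachable.symm.trans hxj))
  apply le_antisymm
  · calc G.dist x (u b) ≤ G.dist x (u j') + G.dist (u j') (u b) := hG.dist_triangle
      _ ≤ (deleteImage u).dist x (u j') + C.dist j' b :=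
        add_le_add (hxj.dist_anti deleteImage_le) (dist_map_le u r.reachable)
  · calc (deleteImage u).dist x (u j') + C.dist j' b ≤ q.length + r.length :=
        add_le_add (SimpleGraph.dist_le q) (SimpleGraph.dist_le r)
      _ ≤ G.dist x (u b) := hqr.trans_eq hp

theorem dist_map_core (hG : G.Connected) (hu : Function.Injective (branch u)) (a b : ι) :
    G.dist (u a) (u b) = C.dist a b := by
  simpa using dist_eq_dist_branch_add_dist_core hG hu (x := u a) (j := a) rfl b

variable [Fintype V]

theorem eDist_eq_of_mem_compEdges_branch (hG : G.Connected) (hu : Function.Injective (branch u))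
    {p a b : ι} (hp : C.dist p a = C.dist p b) {f : Sym2 V}
    (hf : f ∈ compEdges (deleteImage u) (branch u p)) :
    eDist G f (u a) = eDist G f (u b) := by
  have hbranch : ∀ x ∈ f, G.dist x (u a) = G.dist x (u b) := fun x hx ↦ by
    have hxp := (mem_filter.1 hf).2 x hx
    simp only [dist_eq_dist_branch_add_dist_core hG hu hxp, hp]
  induction f with
  | _ x y =>
    simp only [eDist, Sym2.lift_mk, hbranch x (Sym2.mem_mk_left x y),
      hbranch y (Sym2.mem_mk_right x y)]

theorem card_filter_edgeFinset_eq_add [Fintype ι] (hu : Function.Injective u) (P : Sym2 V → Prop)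
    [DecidablePred P] :
    #{f ∈ G.edgeFinset | P f} =
      #{e ∈ C.edgeFinset | P (e.map u)} + #{f ∈ (deleteImage u).edgeFinset | P f} := by
  have hsub : Sym2.map u '' C.edgeSet ⊆ G.edgeSet := by
    rintro _ ⟨e, he, rfl⟩
    exact u.map_mem_edgeSet he
  have hedges : G.edgeFinset = C.edgeFinset.image (Sym2.map u) ∪ (deleteImage u).edgeFinset := by
    ext f
    have := @hsub f
    simp only [mem_union, mem_image, SimpleGraph.mem_edgeFinset, edgeSet_deleteImage, Set.mem_sdiff,
      ← Set.mem_image]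
    tauto
  have hdisj : Disjoint (C.edgeFinset.image (Sym2.map u)) (deleteImage u).edgeFinset := by
    simp only [← disjoint_coe, coe_image, SimpleGraph.coe_edgeFinset, edgeSet_deleteImage]
    exact Set.disjoint_sdiff_right
  rw [hedges, filter_union, card_union_of_disjoint (disjoint_filter_filter hdisj), filter_image,
    card_image_of_injective _ (Sym2.map.injective hu)]

theorem card_edgeFinset_eq_add (hu : Function.Injective u) :
    #G.edgeFinset = C.edgeSet.ncard + #(deleteImage u).edgeFinset := by
  have := Fintype.ofInjective u hu
  rw [← SimpleGraph.coe_edgeFinset, Set.ncard_coe_finset]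
  simpa using card_filter_edgeFinset_eq_add hu fun _ ↦ True

theorem mCloser_map_core [Fintype ι] (hG : G.Connected) (hu : Function.Injective (branch u))
    (a b : ι) :
    mCloser G (u a) (u b) =
      mCloser C a b + #{f ∈ (deleteImage u).edgeFinset | eDist G f (u a) < eDist G f (u b)} := by
  rw [mCloser, card_filter_edgeFinset_eq_add (injective_of_branch_injective hu)]
  simp only [eDist_map (dist_map_core hG hu), mCloser]

end Branches

section Circulant

open SimpleGraph (circulantGraph)

variable {A : Type*} [AddCommGroup A]

/-- The reflection `x ↦ t - x` as an automorphism of a circulant graph; for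
`t = a + b` it swaps `a` and `b`. -/
def circulantReflection (s : Set A) (t : A) : circulantGraph s ≃g circulantGraph s where
  toEquiv := Equiv.subLeft t
  map_rel_iff' := by simp [or_comm]

theorem mCloser_circulantGraph_comm [Fintype A] (s : Set A) (a b : A) :
    mCloser (circulantGraph s) a b = mCloser (circulantGraph s) b a := by
  simpa [circulantReflection] using (mCloser_map_iso (circulantReflection s (a + b)) a b).symm

theorem dist_circulantGraph_eq_of_add_self_eq (s : Set A) {p a b : A} (h : p + p = a + b) :
    (circulantGraph s).dist p a = (circulantGraph s).dist p b := by
  have hp : a + b - p = p := sub_eq_of_eq_add h.symm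
  simpa [circulantReflection, hp] using (dist_map_iso (circulantReflection s (a + b)) p a).symm

theorem edgeSet_circulantGraph_singleton {g : A} (hg : g ≠ 0) :
    (circulantGraph {g}).edgeSet = Set.range fun x ↦ s(x, x + g) := by
  ext e
  induction e with
  | _ x y =>
    simp only [SimpleGraph.mem_edgeSet, SimpleGraph.circulantGraph_adj, Set.mem_singleton_iff,
      sub_eq_iff_eq_add', Set.mem_range, Sym2.eq_iff]
    constructor
    · rintro ⟨-, rfl | rfl⟩
      · exact ⟨y, .inr ⟨rfl, rfl⟩⟩
      · exact ⟨x, .inl ⟨rfl, rfl⟩⟩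
    · rintro ⟨z, ⟨rfl, rfl⟩ | ⟨rfl, rfl⟩⟩ <;> simp [hg]

theorem ncard_edgeSet_circulantGraph_singleton {g : A} (hg : g + g ≠ 0) :
    (circulantGraph {g}).edgeSet.ncard = Nat.card A := by
  have hinj : Function.Injective fun x : A ↦ s(x, x + g) := fun x y hxy ↦ by
    rcases Sym2.eq_iff.1 hxy with ⟨h, -⟩ | ⟨h, h'⟩
    · exact h
    · exact absurd (by simpa [h, add_assoc] using h') hg
  have hg₀ : g ≠ 0 := fun h ↦ hg (by rw [h, add_zero])
  rw [edgeSet_circulantGraph_singleton hg₀, ← Set.image_univ,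
    Set.ncard_image_of_injective _ hinj, Set.ncard_univ]

variable {V : Type*} {G : SimpleGraph V} {g : A}

/-- A family of vertices of `G` indexed by `A` with `u x` adjacent to `u (x + g)`, as a homomorphism
from the circulant graph with jump `g`. For `A = ZMod n` and `g = 1` it is a closed walk. -/
def circulantHom (u : A → V) (hadj : ∀ x, G.Adj (u x) (u (x + g))) : circulantGraph {g} →g G where
  toFun := u
  map_rel' := by
    rintro x y ⟨-, hxy | hxy⟩
    · rw [sub_eq_iff_eq_add'.1 hxy]
      exact (hadj y).symm
    · rw [sub_eq_iff_eq_add'.1 hxy]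
      exact hadj x

theorem image_edgeSet_circulantHom (u : A → V) (hadj : ∀ x, G.Adj (u x) (u (x + g))) :
    Sym2.map (circulantHom u hadj) '' (circulantGraph {g}).edgeSet =
      {f | ∃ x, f = s(u x, u (x + g))} := by
  have hg : g ≠ 0 := by
    rintro rfl
    exact (hadj 0).ne (by simp)
  rw [edgeSet_circulantGraph_singleton hg, ← Set.range_comp]
  ext f
  simp [circulantHom, eq_comm]

end Circulant

theorem zmod_one_add_one_ne_zero_of_odd {n : ℕ} (hn : Odd n) (hn₁ : 1 < n) :
    (1 + 1 : ZMod n) ≠ 0 := by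
  have : Fact (1 < n) := ⟨hn₁⟩
  exact (ZMod.add_self_eq_zero_iff_eq_zero hn).not.2 one_ne_zero

theorem add_natCast_add_one_add_self (k : ℕ) (i : ZMod (2 * k + 1)) :
    (i + k + 1) + (i + k + 1) = i + (i + 1) := by
  have hn : (2 * k + 1 : ZMod (2 * k + 1)) = 0 := mod_cast ZMod.natCast_self (2 * k + 1)
  linear_combination hn

theorem stmt7_general {V ι : Type*} [Fintype V] [Fintype ι] {G : SimpleGraph V}
    {C : SimpleGraph ι} (u : C →g G) (hG : G.Connected)
    (hcomp : Nat.card (deleteImage u).ConnectedComponent = Nat.card ι) {p a b : ι}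
    (hab : mCloser C a b = mCloser C b a) (hp : C.dist p a = C.dist p b) :
    ((mCloser G (u a) (u b) : ℤ) - mCloser G (u b) (u a)) ^ 2 ≤
      ((#G.edgeFinset : ℤ) - C.edgeSet.ncard - #(compEdges (deleteImage u) (branch u p))) ^ 2 := by
  have : Nonempty ι := ⟨p⟩
  have hu := branch_injective_of_card_eq hG.preconnected hcomp
  have hequi : compEdges (deleteImage u) (branch u p) ⊆
      {f ∈ (deleteImage u).edgeFinset | eDist G f (u a) = eDist G f (u b)} := fun f hf ↦
    mem_filter.2 ⟨(mem_filter.1 hf).1, eDist_eq_of_mem_compEdges_branch hG hu hp hf⟩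
  have htri := card_filter_lt_add_card_filter_gt_add_card_filter_eq (deleteImage u).edgeFinset
    (eDist G · (u a)) (eDist G · (u b))
  have hle := card_le_card hequi
  rw [mCloser_map_core hG hu, mCloser_map_core hG hu, hab,
    card_edgeFinset_eq_add (injective_of_branch_injective hu)]
  apply sq_le_sq' <;> push_cast <;> lia

/-- odd-cycle edge bound: for each cycle edge `v_i v_{i+1}` of an odd cycle
`C_{2k+1}` whose edge deletion yields exactly `2k+1` components,
`(m_{v_i} − m_{v_{i+1}})² ≤ (m − 2k − 1 − m_{i+k+1})²`, where `m_{i+k+1}` is the number of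
edges of the component of `G − E(C_{2k+1})` containing `v_{i+k+1}`. -/
theorem stmt7 {V : Type*} [Fintype V] (G : SimpleGraph V) (hG : G.Connected)
    (k : ℕ) (hk : 1 ≤ k) (u : ZMod (2 * k + 1) → V) (hinj : Function.Injective u)
    (hadj : ∀ i, G.Adj (u i) (u (i + 1)))
    (S : Set (Sym2 V)) (hS : S = {f | ∃ i, f = s(u i, u (i + 1))})
    (hcomp : Nat.card (G.deleteEdges S).ConnectedComponent = 2 * k + 1)
    (i : ZMod (2 * k + 1)) :
    ((mCloser G (u i) (u (i + 1)) : ℤ) - (mCloser G (u (i + 1)) (u i) : ℤ)) ^ 2 ≤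
      ((G.edgeFinset.card : ℤ) - (2 * k + 1) -
        (compEdges (G.deleteEdges S)
          ((G.deleteEdges S).connectedComponentMk (u (i + (k : ZMod (2 * k + 1)) + 1))) : Finset (Sym2 V)).card) ^ 2 := by
  obtain rfl := hS.trans (image_edgeSet_circulantHom u hadj).symm
  have h := stmt7_general (circulantHom u hadj) hG (hcomp.trans (Nat.card_zmod _).symm)
    (mCloser_circulantGraph_comm {1} i (i + 1))
    (dist_circulantGraph_eq_of_add_self_eq {1} (add_natCast_add_one_add_self k i))
  rw [ncard_edgeSet_circulantGraph_singleton
    (zmod_one_add_one_ne_zero_of_odd (odd_two_mul_add_one k) (by lia)), Nat.card_zmod] at h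
  exact_mod_cast h
end

section
/- Let G be a connected graph with m edges containing an odd cycle C_{2k+1} such that G − E(C_{2k+1}) has exactly 2k+1 connected components. Then Σ_{e=uv ∈ C_{2k+1}} (m_u(e|G) − m_v(e|G))² ≤ 2k(m − 2k − 1)², with equality if and only if C_{2k+1} is an end-block. -/
open scoped Classical
open Finset

/-!
Deleting the edges of the cycle leaves one branch at each vertex `u i`, and the distance from a
vertex of that branch to `u j` is its distance to the root `u i` inside the branch plus the cyclic
distance from `i` to `j`. Hence all edges of a branch are nearer to the same end of the cycle edge
`{u j, u (j + 1)}`, except for the branch opposite to that edge, whose edges are equidistant from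
both ends; the cycle edges themselves cancel by reflection. If `m i` counts the edges of the
`i`-th branch, `M = ∑ i, m i`, and `a` is the index opposite to the edge `j`, the `j`-th
difference is thus `∑ i, ± m i` without the term of `a`, and its square is at most
`(M - m a) ^ 2 ≤ M * (M - m a)`. Summing over `j` gives `2 * k * M ^ 2`, and equality forces
`m a = 0` or `m a = M` for every `a`.
-/

section SignedSums

variable {ι κ R : Type*} [Fintype ι] [CommRing R] {m : ι → R}

lemma sq_sum_mul_sign_eq (h : (Function.support m).Subsingleton) {s : ι → SignType} {a : ι}
    (hs : ∀ i, s i = 0 ↔ i = a) :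
    (∑ i, m i * s i) ^ 2 = (∑ i, m i) * (∑ i, m i - m a) := by
  rcases h.eq_empty_or_singleton with h0 | ⟨b, hb⟩
  · simp [Function.support_eq_empty_iff.mp h0]
  have hm0 : ∀ i, i ≠ b → m i = 0 := fun i hi => by
    simpa using (hb ▸ hi : i ∉ Function.support m)
  have hsum : ∑ i, m i = m b := Fintype.sum_eq_single b hm0
  have hssum : ∑ i, m i * s i = m b * s b :=
    Fintype.sum_eq_single b fun i hi => by rw [hm0 i hi, zero_mul]
  rw [hsum, hssum]
  by_cases hab : b = a
  · simp [(hs b).mpr hab, ← hab]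
  · rw [hm0 a (Ne.symm hab), mul_pow, ← SignType.coe_pow,
      SignType.pow_even _ even_two (mt (hs b).mp hab)]
    simp [sq]

lemma sum_sum_mul_sum_sub [Fintype κ] (m : ι → R) (τ : κ ≃ ι) :
    ∑ j, (∑ i, m i) * (∑ i, m i - m (τ j)) = (Fintype.card κ - 1) * (∑ i, m i) ^ 2 := by
  rw [← mul_sum, sum_sub_distrib, Equiv.sum_comp τ m, sum_const, card_univ, nsmul_eq_mul]
  ring

variable [LinearOrder R] [IsStrictOrderedRing R]

lemma abs_sum_mul_sign_le (hm : 0 ≤ m) {s : ι → SignType} {a : ι} (ha : s a = 0) :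
    |∑ i, m i * s i| ≤ ∑ i, m i - m a := by
  have hterm : ∀ i, |m i * (s i : R)| ≤ m i := fun i => by
    have hi : 0 ≤ m i := hm i
    rcases (s i).trichotomy with h | h | h <;> simp [h, abs_of_nonneg hi, hi]
  calc |∑ i, m i * s i| = |∑ i ∈ univ.erase a, m i * s i| := by
        rw [sum_erase univ (by simp [ha])]
    _ ≤ ∑ i ∈ univ.erase a, m i :=
        (abs_sum_le_sum_abs _ _).trans (sum_le_sum fun i _ => hterm i)
    _ = ∑ i, m i - m a := sum_erase_eq_sub (mem_univ a)

lemma sq_sum_mul_sign_le_sq (hm : 0 ≤ m) {s : ι → SignType} {a : ι} (ha : s a = 0) :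
    (∑ i, m i * s i) ^ 2 ≤ (∑ i, m i - m a) ^ 2 :=
  sq_le_sq.mpr ((abs_sum_mul_sign_le hm ha).trans (le_abs_self _))

lemma sq_sum_mul_sign_le (hm : 0 ≤ m) {s : ι → SignType} {a : ι} (ha : s a = 0) :
    (∑ i, m i * s i) ^ 2 ≤ (∑ i, m i) * (∑ i, m i - m a) := by
  have hle : m a ≤ ∑ i, m i := single_le_sum (fun i _ => hm i) (mem_univ a)
  refine (sq_sum_mul_sign_le_sq hm ha).trans ?_
  rw [sq]
  exact mul_le_mul_of_nonneg_right (sub_le_self _ (hm a)) (sub_nonneg.mpr hle)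

lemma eq_zero_or_eq_sum_of_sq_sum_mul_sign_eq (hm : 0 ≤ m) {s : ι → SignType} {a : ι}
    (ha : s a = 0) (h : (∑ i, m i * s i) ^ 2 = (∑ i, m i) * (∑ i, m i - m a)) :
    m a = 0 ∨ m a = ∑ i, m i := by
  have hle : m a ≤ ∑ i, m i := single_le_sum (fun i _ => hm i) (mem_univ a)
  have hsq := sq_sum_mul_sign_le_sq hm ha
  have hprod : m a * (∑ i, m i - m a) = 0 :=
    le_antisymm (by linarith) (mul_nonneg (hm a) (sub_nonneg.mpr hle))
  rcases mul_eq_zero.mp hprod with h0 | h0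
  · exact .inl h0
  · exact .inr (sub_eq_zero.mp h0).symm

lemma support_subsingleton_of_eq_zero_or_eq_sum (hm : 0 ≤ m)
    (h : ∀ i, m i = 0 ∨ m i = ∑ i, m i) : (Function.support m).Subsingleton := by
  intro i hi i' hi'
  by_contra hne
  have hpair : m i + m i' ≤ ∑ i, m i := by
    rw [← sum_pair hne]
    exact sum_le_sum_of_subset_of_nonneg (subset_univ _) fun i _ _ => hm i
  have hpos : 0 < m i' := (hm i').lt_of_ne' hi'
  linarith [(h i).resolve_left hi]

variable [Fintype κ] {s : ι → κ → SignType} {τ : κ ≃ ι}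

theorem sum_sq_sum_mul_sign_le (hm : 0 ≤ m) (hs : ∀ j, s (τ j) j = 0) :
    ∑ j, (∑ i, m i * s i j) ^ 2 ≤ (Fintype.card κ - 1) * (∑ i, m i) ^ 2 := by
  rw [← sum_sum_mul_sum_sub m τ]
  exact sum_le_sum fun j _ => sq_sum_mul_sign_le hm (hs j)

theorem sum_sq_sum_mul_sign_eq_iff (hm : 0 ≤ m) (hs : ∀ i j, s i j = 0 ↔ i = τ j) :
    ∑ j, (∑ i, m i * s i j) ^ 2 = (Fintype.card κ - 1) * (∑ i, m i) ^ 2 ↔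
      (Function.support m).Subsingleton := by
  have hτ : ∀ j, s (τ j) j = 0 := fun j => (hs _ j).mpr rfl
  rw [← sum_sum_mul_sum_sub m τ, sum_eq_sum_iff_of_le fun j _ => sq_sum_mul_sign_le hm (hτ j)]
  refine ⟨fun h => support_subsingleton_of_eq_zero_or_eq_sum hm fun i => ?_,
    fun h j _ => sq_sum_mul_sign_eq h fun i => hs i j⟩
  obtain ⟨j, rfl⟩ := τ.surjective i
  exact eq_zero_or_eq_sum_of_sq_sum_mul_sign_eq hm (hτ j) (h j (mem_univ j))

end SignedSums

section CyclicNorm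

variable {n : ℕ}

/-- The distance from `0` to `x` around the cycle `ZMod n`. -/
def cyclicNorm (x : ZMod n) : ℕ := x.valMinAbs.natAbs

lemma cyclicNorm_zero : cyclicNorm (0 : ZMod n) = 0 := by simp [cyclicNorm]

lemma cyclicNorm_neg (x : ZMod n) : cyclicNorm (-x) = cyclicNorm x := ZMod.natAbs_valMinAbs_neg x

lemma cyclicNorm_add_le (x y : ZMod n) : cyclicNorm (x + y) ≤ cyclicNorm x + cyclicNorm y :=
  (ZMod.natAbs_valMinAbs_add_le x y).trans (Int.natAbs_add_le _ _)

lemma cyclicNorm_one_le : cyclicNorm (1 : ZMod n) ≤ 1 := by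
  rcases lt_or_ge n 2 with hn | hn
  · interval_cases n <;> decide
  · have h := ZMod.valMinAbs_natCast_of_le_half (n := n) (a := 1) (by lia)
    rw [Nat.cast_one] at h
    simp [cyclicNorm, h]

lemma cyclicNorm_le_add_one {x y : ZMod n} (h : y = x + 1 ∨ x = y + 1) :
    cyclicNorm x ≤ cyclicNorm y + 1 := by
  have hle := cyclicNorm_one_le (n := n)
  rcases h with rfl | rfl
  · have := cyclicNorm_add_le (x + 1) (-1)
    rw [add_neg_cancel_right, cyclicNorm_neg] at this
    lia
  · have := cyclicNorm_add_le y 1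
    lia

lemma exists_natCast_eq_cyclicNorm (x : ZMod n) :
    (cyclicNorm x : ZMod n) = x ∨ (cyclicNorm x : ZMod n) = -x := by
  have hx := ZMod.coe_valMinAbs x
  rcases Int.natAbs_eq x.valMinAbs with h | h <;> rw [h] at hx
  · exact .inl (by rwa [Int.cast_natCast] at hx)
  · exact .inr (neg_eq_iff_eq_neg.mp (by rwa [Int.cast_neg, Int.cast_natCast] at hx))

/-- Which of the two ends of the edge `{0, 1}` of the cycle `ZMod n` is nearer to `x`:
`1` for the end `0`, `-1` for the end `1`, and `0` if both are equally near. -/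
noncomputable def nearerEnd (x : ZMod n) : SignType :=
  SignType.sign ((cyclicNorm (x - 1) : ℤ) - cyclicNorm x)

lemma nearerEnd_eq_zero_iff [Nontrivial (ZMod n)] {x : ZMod n} : nearerEnd x = 0 ↔ 2 * x = 1 := by
  rw [nearerEnd, sign_eq_zero_iff, sub_eq_zero, Nat.cast_inj, cyclicNorm, cyclicNorm,
    ZMod.natAbs_valMinAbs_eq_natAbs_valMinAbs]
  have hne : x - 1 ≠ x := fun h => one_ne_zero (sub_eq_self.mp h)
  rw [or_iff_right hne, sub_eq_iff_eq_add, neg_add_eq_sub, eq_sub_iff_add_eq, two_mul]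

lemma zmod_two_mul_eq_one_iff {k : ℕ} {x : ZMod (2 * k + 1)} : 2 * x = 1 ↔ x = k + 1 := by
  have hn : (2 * k + 1 : ZMod (2 * k + 1)) = 0 := by exact_mod_cast ZMod.natCast_self (2 * k + 1)
  constructor <;> intro h
  · linear_combination (k + 1) * h - x * hn
  · linear_combination 2 * h + hn

lemma nearerEnd_sub_eq_zero_iff {k : ℕ} [Nontrivial (ZMod (2 * k + 1))] {x j : ZMod (2 * k + 1)} :
    nearerEnd (x - j) = 0 ↔ x = j + (k + 1) := by
  rw [nearerEnd_eq_zero_iff, zmod_two_mul_eq_one_iff, sub_eq_iff_eq_add']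

lemma sum_range_natCast_zmod [NeZero n] {M : Type*} [AddCommMonoid M] (f : ZMod n → M) :
    ∑ j ∈ range n, f j = ∑ j, f j := by
  obtain _ | n := n
  · exact (NeZero.ne 0 rfl).elim
  rw [sum_range]
  exact Fintype.sum_congr _ _ fun j => congrArg f (Fin.cast_val_eq_self j)

end CyclicNorm

section Edges

variable {V : Type*} [Fintype V] (G : SimpleGraph V)

lemma mCloser_sub_mCloser (a b : V) :
    (mCloser G a b : ℤ) - mCloser G b a =
      ∑ f ∈ G.edgeFinset, (SignType.sign ((eDist G f b : ℤ) - eDist G f a) : ℤ) := by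
  simp only [mCloser, card_filter, Nat.cast_sum, ← sum_sub_distrib]
  refine sum_congr rfl fun f _ => ?_
  rcases lt_trichotomy (eDist G f a) (eDist G f b) with h | h | h
  · simp [h, h.not_gt]
  · simp [h]
  · simp [h, h.not_gt]

lemma sum_compEdges [Fintype G.ConnectedComponent] [Fintype G.edgeSet] {M : Type*}
    [AddCommMonoid M] (φ : Sym2 V → M) :
    ∑ c, ∑ f ∈ compEdges G c, φ f = ∑ f ∈ G.edgeFinset, φ f := by
  have hclass : ∀ c, ∑ f ∈ compEdges G c, φ f =
      ∑ f ∈ G.edgeFinset, if ∀ x ∈ f, G.connectedComponentMk x = c then φ f else 0 := fun c => by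
    rw [compEdges, sum_filter]
    congr!
  rw [Fintype.sum_congr _ _ hclass, sum_comm]
  refine sum_congr rfl fun f hf => ?_
  induction f using Sym2.ind with
  | _ a b =>
    have hab : G.connectedComponentMk b = G.connectedComponentMk a :=
      SimpleGraph.ConnectedComponent.sound (SimpleGraph.mem_edgeFinset.mp hf).reachable.symm
    simp [hab]

lemma sum_compEdges_deleteEdges_add {M : Type*} [AddCommMonoid M] {S : Set (Sym2 V)} [Fintype S]
    (hS : S ⊆ G.edgeSet) (φ : Sym2 V → M) :
    ∑ c, ∑ f ∈ compEdges (G.deleteEdges S) c, φ f + ∑ f ∈ S.toFinset, φ f =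
      ∑ f ∈ G.edgeFinset, φ f := by
  have hsdiff : (G.deleteEdges S).edgeFinset = G.edgeFinset \ S.toFinset := by
    ext f
    simp only [SimpleGraph.mem_edgeFinset, SimpleGraph.edgeSet_deleteEdges, mem_sdiff,
      Set.mem_sdiff, Set.mem_toFinset]
  have hsub : S.toFinset ⊆ G.edgeFinset := fun f hf =>
    SimpleGraph.mem_edgeFinset.mpr (hS (Set.mem_toFinset.mp hf))
  rw [sum_compEdges, hsdiff, sum_sdiff hsub]

end Edges

lemma exists_reachable_deleteEdges {V : Type*} {G : SimpleGraph V} {S : Set (Sym2 V)} {T : Set V}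
    (hST : ∀ f ∈ S, ∀ x ∈ f, x ∈ T) {v t : V} (ht : t ∈ T) (h : G.Reachable v t) :
    ∃ x ∈ T, (G.deleteEdges S).Reachable v x := by
  obtain ⟨w⟩ := h
  induction w with
  | nil => exact ⟨_, ht, .refl _⟩
  | @cons a b c hab _ ih =>
    by_cases hS : s(a, b) ∈ S
    · exact ⟨a, hST _ hS a (Sym2.mem_mk_left a b), .refl a⟩
    · obtain ⟨x, hx, hbx⟩ := ih ht
      exact ⟨x, hx, (SimpleGraph.deleteEdges_adj.mpr ⟨hab, hS⟩).reachable.trans hbx⟩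

section Cycle

variable {V : Type*} {G : SimpleGraph V} {n : ℕ} {u : ZMod n → V}

/-- The edge set of the closed walk `u 0, u 1, …, u (n - 1), u 0`. -/
def cycleEdges (u : ZMod n → V) : Set (Sym2 V) := {f | ∃ i, f = s(u i, u (i + 1))}

/-- The graph left after deleting the edges of the cycle; when the vertices of the cycle lie in
distinct components, the component of `u i` is the branch of `G` rooted at `u i`. -/
abbrev branches (G : SimpleGraph V) (u : ZMod n → V) : SimpleGraph V :=
  G.deleteEdges (cycleEdges u)

lemma branches_connectedComponentMk_surjective (hG : G.Connected) :
    Function.Surjective fun i => (branches G u).connectedComponentMk (u i) := by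
  have hends : ∀ f ∈ cycleEdges u, ∀ x ∈ f, x ∈ Set.range u := by
    rintro _ ⟨i, rfl⟩ x hx
    rcases Sym2.mem_iff.mp hx with rfl | rfl <;> exact Set.mem_range_self _
  refine SimpleGraph.ConnectedComponent.ind fun v => ?_
  obtain ⟨_, ⟨i, rfl⟩, h⟩ := exists_reachable_deleteEdges hends (Set.mem_range_self 0) (hG v (u 0))
  exact ⟨i, SimpleGraph.ConnectedComponent.sound h.symm⟩

lemma exists_equiv_branches_connectedComponent [NeZero n] (hG : G.Connected)
    (hcomp : Nat.card (branches G u).ConnectedComponent = n) :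
    ∃ e : ZMod n ≃ (branches G u).ConnectedComponent,
      ∀ i, e i = (branches G u).connectedComponentMk (u i) :=
  ⟨Equiv.ofBijective _ ((branches_connectedComponentMk_surjective hG).bijective_of_nat_card_le
    (by rw [hcomp, Nat.card_zmod])), fun _ => rfl⟩

lemma dist_add_natCast_le (hadj : ∀ i, G.Adj (u i) (u (i + 1))) (i : ZMod n) (t : ℕ) :
    G.dist (u i) (u (i + t)) ≤ t := by
  induction t with
  | zero => simp
  | succ t ih =>
    rw [Nat.cast_add_one, ← add_assoc]
    calc G.dist (u i) (u (i + t + 1))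
        ≤ G.dist (u i) (u (i + t)) + G.dist (u (i + t)) (u (i + t + 1)) :=
          (hadj _).reachable.dist_triangle_right _
      _ ≤ t + 1 := add_le_add ih (SimpleGraph.dist_eq_one_iff_adj.mpr (hadj _)).le

lemma dist_le_cyclicNorm (hadj : ∀ i, G.Adj (u i) (u (i + 1))) (i j : ZMod n) :
    G.dist (u i) (u j) ≤ cyclicNorm (i - j) := by
  rcases exists_natCast_eq_cyclicNorm (i - j) with h | h
  · simpa [h, SimpleGraph.dist_comm] using dist_add_natCast_le hadj j (cyclicNorm (i - j))
  · simpa [h] using dist_add_natCast_le hadj i (cyclicNorm (i - j))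

lemma exists_succ_of_mem_cycleEdges {a b : V} (h : s(a, b) ∈ cycleEdges u) :
    ∃ i j, a = u i ∧ b = u j ∧ (i = j + 1 ∨ j = i + 1) := by
  obtain ⟨i, hi⟩ := h
  rcases Sym2.eq_iff.mp hi with ⟨ha, hb⟩ | ⟨ha, hb⟩
  · exact ⟨i, i + 1, ha, hb, .inr rfl⟩
  · exact ⟨i + 1, i, ha, hb, .inl rfl⟩

-- Along the walk the left-hand side drops by at most one per step: a step along the cycle starts
-- and ends at roots, where the branch distance vanishes.
lemma dist_branches_add_cyclicNorm_le_length
    (hinj : Function.Injective fun i => (branches G u).connectedComponentMk (u i))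
    {v x : V} (w : G.Walk v x) {i j : ZMod n} (hx : x = u j)
    (hv : (branches G u).Reachable v (u i)) :
    (branches G u).dist v (u i) + cyclicNorm (i - j) ≤ w.length := by
  have hroot : ∀ {i l}, (branches G u).Reachable (u l) (u i) → l = i :=
    fun h => hinj (SimpleGraph.ConnectedComponent.sound h)
  induction w generalizing i with
  | nil =>
    subst hx
    obtain rfl := hroot hv
    simp [cyclicNorm_zero]
  | @cons a b c hab w ih =>
    rw [SimpleGraph.Walk.length_cons]
    by_cases hS : s(a, b) ∈ cycleEdges u
    · obtain ⟨l, l', rfl, rfl, hl⟩ := exists_succ_of_mem_cycleEdges hS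
      obtain rfl := hroot hv
      have hih := ih hx (.refl _)
      have hstep : cyclicNorm (l - j) ≤ cyclicNorm (l' - j) + 1 :=
        cyclicNorm_le_add_one (by grind)
      rw [SimpleGraph.dist_self] at hih ⊢
      lia
    · have hadj : (branches G u).Adj a b :=
        SimpleGraph.deleteEdges_adj.mpr ⟨hab, hS⟩
      have hih := ih hx (hadj.symm.reachable.trans hv)
      have hstep := hadj.reachable.dist_triangle_left (u i)
      rw [SimpleGraph.dist_eq_one_iff_adj.mpr hadj] at hstep
      lia

lemma dist_eq_dist_branches_add_cyclicNorm (hG : G.Connected)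
    (hadj : ∀ i, G.Adj (u i) (u (i + 1)))
    (hinj : Function.Injective fun i => (branches G u).connectedComponentMk (u i))
    {v : V} {i : ZMod n} (hv : (branches G u).Reachable v (u i)) (j : ZMod n) :
    G.dist v (u j) = (branches G u).dist v (u i) + cyclicNorm (i - j) := by
  apply le_antisymm
  · calc G.dist v (u j) ≤ G.dist v (u i) + G.dist (u i) (u j) := hG.dist_triangle
      _ ≤ _ := add_le_add (hv.dist_anti (SimpleGraph.deleteEdges_le _))
        (dist_le_cyclicNorm hadj i j)
  · obtain ⟨w, hw⟩ := hG.exists_walk_length_eq_dist v (u j)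
    exact hw ▸ dist_branches_add_cyclicNorm_le_length hinj w rfl hv

lemma eDist_eq_eDist_branches_add_cyclicNorm (hG : G.Connected)
    (hadj : ∀ i, G.Adj (u i) (u (i + 1)))
    (hinj : Function.Injective fun i => (branches G u).connectedComponentMk (u i))
    {f : Sym2 V} {i : ZMod n}
    (hf : ∀ x ∈ f, (branches G u).Reachable x (u i)) (j : ZMod n) :
    eDist G f (u j) = eDist (branches G u) f (u i) + cyclicNorm (i - j) := by
  induction f using Sym2.ind with
  | _ a b =>
    simp only [eDist, Sym2.lift_mk,
      dist_eq_dist_branches_add_cyclicNorm hG hadj hinj (hf a (Sym2.mem_mk_left a b)) j,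
      dist_eq_dist_branches_add_cyclicNorm hG hadj hinj (hf b (Sym2.mem_mk_right a b)) j]
    exact min_add_add_right _ _ _

lemma eDist_cycleEdge (hG : G.Connected) (hadj : ∀ i, G.Adj (u i) (u (i + 1)))
    (hinj : Function.Injective fun i => (branches G u).connectedComponentMk (u i)) (i j : ZMod n) :
    eDist G s(u i, u (i + 1)) (u j) = min (cyclicNorm (i - j)) (cyclicNorm (i + 1 - j)) := by
  simp [eDist, dist_eq_dist_branches_add_cyclicNorm hG hadj hinj (.refl _)]

-- The reflection `i ↦ 2 j + 1 - i` of the cycle swaps the ends of the edge `j` and sends the edge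
-- `i` to the edge `2 j - i`.
lemma eDist_cycleEdge_reflect (hG : G.Connected) (hadj : ∀ i, G.Adj (u i) (u (i + 1)))
    (hinj : Function.Injective fun i => (branches G u).connectedComponentMk (u i)) (i j : ZMod n) :
    eDist G s(u (2 * j - i), u (2 * j - i + 1)) (u (j + 1)) =
      eDist G s(u i, u (i + 1)) (u j) := by
  rw [eDist_cycleEdge hG hadj hinj, eDist_cycleEdge hG hadj hinj, min_comm,
    ← cyclicNorm_neg (i - j), ← cyclicNorm_neg (i + 1 - j)]
  ring_nf

lemma sum_sign_eDist_cycleEdge_eq_zero [NeZero n] (hG : G.Connected)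
    (hadj : ∀ i, G.Adj (u i) (u (i + 1)))
    (hinj : Function.Injective fun i => (branches G u).connectedComponentMk (u i)) (j : ZMod n) :
    ∑ i, (SignType.sign ((eDist G s(u i, u (i + 1)) (u (j + 1)) : ℤ) -
      eDist G s(u i, u (i + 1)) (u j)) : ℤ) = 0 := by
  set φ : ZMod n → ℤ := fun i =>
    (SignType.sign ((eDist G s(u i, u (i + 1)) (u (j + 1)) : ℤ) -
      eDist G s(u i, u (i + 1)) (u j)) : ℤ) with hφ
  have hanti : ∀ i, φ (2 * j - i) = -φ i := by
    intro i
    have hend := eDist_cycleEdge_reflect hG hadj hinj i j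
    have hstart := eDist_cycleEdge_reflect hG hadj hinj (2 * j - i) j
    rw [sub_sub_cancel] at hstart
    simp only [hφ, hend, ← hstart]
    rw [← SignType.coe_neg, ← Left.sign_neg, neg_sub]
  have hneg : ∑ i, φ i = -∑ i, φ i := by
    rw [← sum_neg_distrib, ← Equiv.sum_comp (Equiv.subLeft (2 * j)) φ]
    exact Fintype.sum_congr _ _ hanti
  exact self_eq_neg.mp hneg

lemma cycleEdge_injective (hu : Function.Injective u) (h2 : (2 : ZMod n) ≠ 0) :
    Function.Injective fun i => s(u i, u (i + 1)) := by
  intro i j h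
  rcases Sym2.eq_iff.mp h with ⟨h, -⟩ | ⟨h, h'⟩
  · exact hu h
  · exact absurd (by linear_combination hu h' - hu h) h2

lemma sum_compEdges_branches_add [Fintype V] [NeZero n] {M : Type*}
    [AddCommMonoid M] (hu : Function.Injective u) (h2 : (2 : ZMod n) ≠ 0)
    (hadj : ∀ i, G.Adj (u i) (u (i + 1))) (φ : Sym2 V → M) :
    ∑ c, ∑ f ∈ compEdges (branches G u) c, φ f + ∑ i, φ s(u i, u (i + 1)) =
      ∑ f ∈ G.edgeFinset, φ f := by
  have hsub : cycleEdges u ⊆ G.edgeSet := by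
    rintro _ ⟨i, rfl⟩
    exact hadj i
  have himage : (cycleEdges u).toFinset = univ.image fun i => s(u i, u (i + 1)) := by
    ext f
    simp only [Set.mem_toFinset, mem_image, mem_univ, true_and]
    exact exists_congr fun i => eq_comm
  rw [← sum_compEdges_deleteEdges_add G hsub, himage,
    sum_image (cycleEdge_injective hu h2).injOn]

lemma sum_card_compEdges_branches_add [Fintype V] [NeZero n] (hu : Function.Injective u)
    (h2 : (2 : ZMod n) ≠ 0) (hadj : ∀ i, G.Adj (u i) (u (i + 1))) :
    ∑ c, #(compEdges (branches G u) c) + n = #G.edgeFinset := by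
  simpa [ZMod.card] using sum_compEdges_branches_add hu h2 hadj fun _ => (1 : ℕ)

lemma mCloser_sub_mCloser_eq_sum_nearerEnd [Fintype V] [NeZero n] (hG : G.Connected)
    (h2 : (2 : ZMod n) ≠ 0) (hadj : ∀ i, G.Adj (u i) (u (i + 1)))
    (e : ZMod n ≃ (branches G u).ConnectedComponent)
    (he : ∀ i, e i = (branches G u).connectedComponentMk (u i)) (j : ZMod n) :
    (mCloser G (u j) (u (j + 1)) : ℤ) - mCloser G (u (j + 1)) (u j) =
      ∑ c, (#(compEdges (branches G u) c) : ℤ) * nearerEnd (e.symm c - j) := by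
  have hinj : Function.Injective fun i => (branches G u).connectedComponentMk (u i) := by
    simpa only [← he] using e.injective
  have hu : Function.Injective u := .of_comp hinj
  rw [mCloser_sub_mCloser, ← sum_compEdges_branches_add hu h2 hadj,
    sum_sign_eDist_cycleEdge_eq_zero hG hadj hinj, add_zero]
  refine Fintype.sum_congr _ _ fun c => ?_
  obtain ⟨i, rfl⟩ := e.surjective c
  rw [e.symm_apply_apply, ← nsmul_eq_mul, ← sum_const]
  refine sum_congr rfl fun f hf => ?_
  have hreach : ∀ x ∈ f, (branches G u).Reachable x (u i) := fun x hx =>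
    SimpleGraph.ConnectedComponent.exact (((mem_filter.mp hf).2 x hx).trans (he i))
  rw [eDist_eq_eDist_branches_add_cyclicNorm hG hadj hinj hreach,
    eDist_eq_eDist_branches_add_cyclicNorm hG hadj hinj hreach, nearerEnd, sub_sub]
  push_cast
  rw [add_sub_add_left_eq_sub]

lemma sum_range_sq_mCloser_sub [Fintype V] [NeZero n] (hG : G.Connected)
    (h2 : (2 : ZMod n) ≠ 0) (hadj : ∀ i, G.Adj (u i) (u (i + 1)))
    (e : ZMod n ≃ (branches G u).ConnectedComponent)
    (he : ∀ i, e i = (branches G u).connectedComponentMk (u i)) :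
    ∑ j ∈ range n, ((mCloser G (u j) (u (j + 1)) : ℤ) - mCloser G (u (j + 1)) (u j)) ^ 2 =
      ∑ j, (∑ c, (#(compEdges (branches G u) c) : ℤ) * nearerEnd (e.symm c - j)) ^ 2 := by
  simp only [← mCloser_sub_mCloser_eq_sum_nearerEnd hG h2 hadj e he]
  exact sum_range_natCast_zmod fun j =>
    ((mCloser G (u j) (u (j + 1)) : ℤ) - mCloser G (u (j + 1)) (u j)) ^ 2

end Cycle

/-- odd-cycle bound
`Σ_{e=uv ∈ C_{2k+1}} (m_u(e|G) − m_v(e|G))² ≤ 2k(m − 2k − 1)²`, with equality iff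
`C_{2k+1}` is an end-block, i.e. at most one component of `G − E(C_{2k+1})` contains an
edge. -/
theorem stmt8 {V : Type*} [Fintype V] (G : SimpleGraph V) (hG : G.Connected)
    (k : ℕ) (hk : 1 ≤ k) (u : ZMod (2 * k + 1) → V) (hinj : Function.Injective u)
    (hadj : ∀ i, G.Adj (u i) (u (i + 1)))
    (S : Set (Sym2 V)) (hS : S = {f | ∃ i, f = s(u i, u (i + 1))})
    (hcomp : Nat.card (G.deleteEdges S).ConnectedComponent = 2 * k + 1) :
    (∑ j ∈ Finset.range (2 * k + 1),
        ((mCloser G (u j) (u (j + 1)) : ℤ) - (mCloser G (u (j + 1)) (u j) : ℤ)) ^ 2) ≤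
      2 * k * ((G.edgeFinset.card : ℤ) - 2 * k - 1) ^ 2 ∧
    ((∑ j ∈ Finset.range (2 * k + 1),
        ((mCloser G (u j) (u (j + 1)) : ℤ) - (mCloser G (u (j + 1)) (u j) : ℤ)) ^ 2) =
      2 * k * ((G.edgeFinset.card : ℤ) - 2 * k - 1) ^ 2 ↔
      {c : (G.deleteEdges S).ConnectedComponent |
        (compEdges (G.deleteEdges S) c).Nonempty}.Subsingleton) := by
  obtain rfl : S = cycleEdges u := hS
  have : Fact (1 < 2 * k + 1) := ⟨by lia⟩
  have h2 : (2 : ZMod (2 * k + 1)) ≠ 0 :=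
    left_ne_zero_of_mul_eq_one (zmod_two_mul_eq_one_iff.mpr rfl)
  obtain ⟨e, he⟩ := exists_equiv_branches_connectedComponent hG hcomp
  set m : (branches G u).ConnectedComponent → ℤ := fun c => #(compEdges (branches G u) c)
  have hm : 0 ≤ m := fun c => Int.natCast_nonneg _
  have hcard : (#G.edgeFinset : ℤ) - 2 * k - 1 = ∑ c, m c := by
    rw [← sum_card_compEdges_branches_add hinj h2 hadj]
    push_cast
    ring
  have hantipode : ∀ c j, nearerEnd (e.symm c - j) = 0 ↔
      c = (Equiv.addRight (k + 1 : ZMod (2 * k + 1))).trans e j := fun c j => by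
    rw [nearerEnd_sub_eq_zero_iff, Equiv.symm_apply_eq]
    rfl
  have hsupp : {c | (compEdges (branches G u) c).Nonempty} = m.support := by
    ext c
    simp [m, nonempty_iff_ne_empty]
  have hcoef : (2 * k : ℤ) = Fintype.card (ZMod (2 * k + 1)) - 1 := by simp [ZMod.card]
  rw [sum_range_sq_mCloser_sub hG h2 hadj e he, hcard, hcoef, hsupp]
  exact ⟨sum_sq_sum_mul_sign_le hm fun j => (hantipode _ j).mpr rfl,
    sum_sq_sum_mul_sign_eq_iff hm hantipode⟩
end

section
/- Let G be a cactus with k cycles and m < 15 edges. Then Sz*_e(G) ≥ (2m² − m + k((m−9)² − 36))/4 + k(6m − 15), with equality if and only if G ≅ C_0(n,k), the bundle of k triangles with n − 2k − 1 pendant edges at the common vertex. -/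
open scoped Classical
open Finset

/-- A cactus: a connected graph in which any two (edge-)distinct cycles share
at most one vertex. -/
def IsCactus {V : Type*} (G : SimpleGraph V) : Prop :=
  G.Connected ∧ ∀ ⦃a b : V⦄ (p : G.Walk a a) (q : G.Walk b b),
    p.IsCycle → q.IsCycle → p.edges.toFinset ≠ q.edges.toFinset →
    (p.support.toFinset ∩ q.support.toFinset).card ≤ 1

/-- The bundle `G(len 0, …, len (k-1))`: `k` cycles of the given lengths all sharing a single
common hub vertex, together with `p` pendant edges attached at the hub. -/
def bundleGraph (k : ℕ) (len : Fin k → ℕ) (p : ℕ) :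
    SimpleGraph (Unit ⊕ ((Σ i : Fin k, Fin (len i - 1)) ⊕ Fin p)) :=
  SimpleGraph.fromRel fun x y =>
    match x, y with
    | Sum.inl _, Sum.inr (Sum.inr _) => True
    | Sum.inl _, Sum.inr (Sum.inl ⟨i, a⟩) => a.val = 0 ∨ a.val = len i - 2
    | Sum.inr (Sum.inl ⟨i, a⟩), Sum.inr (Sum.inl ⟨j, b⟩) => i = j ∧ a.val + 1 = b.val
    | _, _ => False

/-!
Let `m` be the number of edges and `T w` the sum of the distances from `w` to all edges. Distances
change by at most one along an edge `uv`, so the factors of its term in `Sz*ₑ` are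
`(m ± (T u - T v)) / 2`. Hence `4 Sz*ₑ = m (2 m - 1) + ∑ deficit`, where
`deficit uv = (m - 1)² - (T u - T v)²` is nonnegative because `uv` is at distance `0` from both its
ends.

In a cactus the ends of an edge of a cycle `C` of length `r` have the same total distance to the
edges of `C`, so `|T u - T v| ≤ m - r` on `C`. If `r ≥ 4` and `m < 15` this makes the total deficit
of `C` exceed `m² + 6 m - 15`. If `r = 3`, the three differences sum to zero, so their squares sum
to at most `2 (m - 3)²`, and the total deficit is at least
`3 (m - 1)² - 2 (m - 3)² = m² + 6 m - 15`.
Summing over the cycles gives the bound.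

Equality forces every block to be an edge or a triangle with at most one vertex at which other
blocks are attached. A vertex of maximum degree is then adjacent to all others, which in a cactus
means a bundle of triangles.
-/

section

open SimpleGraph

variable {V : Type*} {G : SimpleGraph V} {u v : V}

theorem eDist_mk (a b w : V) : eDist G s(a, b) w = min (G.dist a w) (G.dist b w) := rfl

theorem eDist_eq_zero_iff (hG : G.Connected) {f : Sym2 V} {w : V} :
    eDist G f w = 0 ↔ w ∈ f := by
  induction f with | h a b =>
  simp only [eDist_mk, Nat.min_eq_zero_iff, hG.dist_eq_zero_iff, Sym2.mem_iff, eq_comm (b := w)]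

theorem eDist_le_one_iff (hG : G.Connected) {f : Sym2 V} {w : V} :
    eDist G f w ≤ 1 ↔ ∃ a ∈ f, a = w ∨ G.Adj a w := by
  have dist_le_one (a : V) : G.dist a w ≤ 1 ↔ a = w ∨ G.Adj a w := by
    rw [Nat.le_one_iff_eq_zero_or_eq_one, hG.dist_eq_zero_iff, dist_eq_one_iff_adj]
  induction f with | h a b =>
  simp only [eDist_mk, min_le_iff, dist_le_one, Sym2.mem_iff, exists_eq_or_imp, exists_eq_left]

theorem eDist_le_add_one (hG : G.Connected) (huv : G.Adj u v) (f : Sym2 V) :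
    eDist G f v ≤ eDist G f u + 1 := by
  have dist_le (x : V) : G.dist x v ≤ G.dist x u + 1 := by
    simpa only [dist_eq_one_iff_adj.mpr huv] using hG.dist_triangle (u := x) (v := u) (w := v)
  induction f with | h a b =>
  simpa only [eDist_mk, min_add_add_right] using min_le_min (dist_le a) (dist_le b)

theorem sum_sum_adj_eq_two_mul [Fintype V] (F : Sym2 V → ℚ) :
    (∑ u, ∑ v, if G.Adj u v then F s(u, v) else 0) = 2 * ∑ e ∈ G.edgeFinset, F e := by
  have sum_darts : (∑ u, ∑ v, if G.Adj u v then F s(u, v) else 0) = ∑ d : G.Dart, F d.edge := by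
    rw [← sum_product', ← sum_filter]
    exact sum_bij' (fun x hx => (⟨x, (mem_filter.mp hx).2⟩ : G.Dart)) (fun d _ => d.toProd)
      (by simp) (fun d _ => by simp [d.adj]) (fun _ _ => rfl) (fun _ _ => rfl) (fun _ _ => rfl)
  rw [sum_darts, mul_sum, ← sum_fiberwise_of_maps_to (t := G.edgeFinset) (g := Dart.edge)
    fun d _ => mem_edgeFinset.mpr d.edge_mem]
  refine sum_congr rfl fun e he => ?_
  rw [sum_congr rfl fun d hd => congrArg F (mem_filter.mp hd).2, sum_const, nsmul_eq_mul,
    G.dart_edge_fiber_card e (mem_edgeFinset.mp he), Nat.cast_two]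

section Imbalance

variable [Fintype V]

variable (G) in
/-- The edge transmission of a vertex `w`: the sum of its distances to all edges. It is valued in
`ℤ` so that differences of transmissions do not truncate. -/
noncomputable def edgeTransmission (w : V) : ℤ := ∑ f ∈ G.edgeFinset, (eDist G f w : ℤ)

variable (G) in
/-- The squared difference of the edge transmissions of the two ends of an edge. -/
noncomputable def sqImbalance (e : Sym2 V) : ℤ :=
  Sym2.lift ⟨fun a b => (edgeTransmission G a - edgeTransmission G b) ^ 2,
    fun _ _ => sub_sq_comm _ _⟩ e

theorem sqImbalance_mk (a b : V) :
    sqImbalance G s(a, b) = (edgeTransmission G a - edgeTransmission G b) ^ 2 := rfl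

theorem sqImbalance_nonneg (e : Sym2 V) : 0 ≤ sqImbalance G e := by
  induction e with | h a b => exact sq_nonneg _

variable (G) in
/-- How far the squared imbalance of an edge falls short of that of a pendant edge, which is the
largest possible one. -/
noncomputable def deficit (e : Sym2 V) : ℤ := (#G.edgeFinset - 1) ^ 2 - sqImbalance G e

theorem mCloser_add_mCloser_add_mEqui (u v : V) :
    mCloser G u v + mCloser G v u + mEqui G u v = #G.edgeFinset := by
  rw [mCloser, mCloser, mEqui, card_filter, card_filter, card_filter, card_eq_sum_ones,
    ← sum_add_distrib, ← sum_add_distrib]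
  refine sum_congr rfl fun f _ => ?_
  split_ifs <;> omega

theorem mCloser_sub_mCloser_s15 (hG : G.Connected) (huv : G.Adj u v) :
    (mCloser G u v : ℤ) - mCloser G v u = edgeTransmission G v - edgeTransmission G u := by
  simp only [mCloser, edgeTransmission, card_filter, Nat.cast_sum, ← sum_sub_distrib]
  refine sum_congr rfl fun f _ => ?_
  have := eDist_le_add_one hG huv f
  have := eDist_le_add_one hG huv.symm f
  split_ifs <;> omega

theorem szRevE_term_eq (hG : G.Connected) (huv : G.Adj u v) :
    ((mCloser G u v : ℚ) + (mEqui G u v : ℚ) / 2) * ((mCloser G v u : ℚ) + (mEqui G u v : ℚ) / 2) =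
      ((#G.edgeFinset : ℚ) ^ 2 - sqImbalance G s(u, v)) / 4 := by
  have sum_eq : (mCloser G u v : ℚ) + mCloser G v u + mEqui G u v = #G.edgeFinset :=
    mod_cast mCloser_add_mCloser_add_mEqui u v
  have sub_eq : (mCloser G u v : ℚ) - mCloser G v u =
      edgeTransmission G v - edgeTransmission G u := mod_cast mCloser_sub_mCloser_s15 hG huv
  rw [sqImbalance_mk, ← neg_sub (edgeTransmission G v), neg_sq, ← sum_eq]
  push_cast
  rw [← sub_eq]
  ring

theorem four_mul_szRevE (hG : G.Connected) :
    4 * szRevE G = #G.edgeFinset * (2 * #G.edgeFinset - 1) + ∑ e ∈ G.edgeFinset, deficit G e := by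
  have szRevE_eq : szRevE G =
      ∑ e ∈ G.edgeFinset, ((#G.edgeFinset : ℚ) ^ 2 - sqImbalance G e) / 4 := by
    rw [szRevE, div_eq_iff two_ne_zero, mul_comm _ (2 : ℚ), ← sum_sum_adj_eq_two_mul]
    exact sum_congr rfl fun u _ => sum_congr rfl fun v _ =>
      ite_congr rfl (szRevE_term_eq hG) fun _ => rfl
  simp only [szRevE_eq, deficit, ← sum_div, sum_sub_distrib, sum_const, nsmul_eq_mul]
  push_cast
  ring

end Imbalance

section Balanced

variable [Fintype V] {S : Finset (Sym2 V)}

variable (G) in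
/-- A set `S` of edges is balanced if the ends of each of its edges have the same total distance to
`S`, so that only the edges outside `S` contribute to the imbalance of an edge of `S`. -/
structure IsBalanced (S : Finset (Sym2 V)) : Prop where
  subset_edgeFinset : S ⊆ G.edgeFinset
  sum_eDist_eq : ∀ ⦃u v⦄, s(u, v) ∈ S → ∑ f ∈ S, eDist G f u = ∑ f ∈ S, eDist G f v

theorem isBalanced_singleton (hG : G.Connected) {e : Sym2 V} (he : e ∈ G.edgeFinset) :
    IsBalanced G {e} where
  subset_edgeFinset := singleton_subset_iff.mpr he
  sum_eDist_eq u v huv := by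
    obtain rfl := mem_singleton.mp huv
    simp only [sum_singleton, (eDist_eq_zero_iff hG).mpr (Sym2.mem_mk_left u v),
      (eDist_eq_zero_iff hG).mpr (Sym2.mem_mk_right u v)]

namespace IsBalanced

theorem adj (hS : IsBalanced G S) (huv : s(u, v) ∈ S) : G.Adj u v :=
  mem_edgeFinset.mp (hS.subset_edgeFinset huv)

theorem sum_sdiff_eq (hS : IsBalanced G S) (huv : s(u, v) ∈ S) :
    ∑ f ∈ G.edgeFinset \ S, ((eDist G f u : ℤ) + 1 - eDist G f v) =
      #G.edgeFinset - #S - (edgeTransmission G v - edgeTransmission G u) := by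
  have sum_eq : ∑ f ∈ S, (eDist G f u : ℤ) = ∑ f ∈ S, (eDist G f v : ℤ) :=
    mod_cast hS.sum_eDist_eq huv
  simp only [edgeTransmission, ← sum_sdiff hS.subset_edgeFinset, sum_eq,
    ← card_sdiff_add_card_eq_card hS.subset_edgeFinset, sum_sub_distrib, sum_add_distrib,
    sum_const, nsmul_eq_mul, mul_one, Nat.cast_add]
  ring

theorem edgeTransmission_sub_le (hG : G.Connected) (hS : IsBalanced G S) (huv : s(u, v) ∈ S) :
    edgeTransmission G v - edgeTransmission G u ≤ #G.edgeFinset - #S := by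
  have sum_nonneg : 0 ≤ ∑ f ∈ G.edgeFinset \ S, ((eDist G f u : ℤ) + 1 - eDist G f v) :=
    Finset.sum_nonneg fun f _ => by have := eDist_le_add_one hG (hS.adj huv) f; omega
  rw [hS.sum_sdiff_eq huv] at sum_nonneg
  linarith

theorem eDist_eq_add_one (hG : G.Connected) (hS : IsBalanced G S) (huv : s(u, v) ∈ S)
    (h : edgeTransmission G v - edgeTransmission G u = #G.edgeFinset - #S) {f : Sym2 V}
    (hf : f ∈ G.edgeFinset) (hfS : f ∉ S) : eDist G f v = eDist G f u + 1 := by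
  have sum_eq_zero := hS.sum_sdiff_eq huv
  rw [h, sub_self, sum_eq_zero_iff_of_nonneg fun f _ => by
    have := eDist_le_add_one hG (hS.adj huv) f; omega] at sum_eq_zero
  have := sum_eq_zero f (mem_sdiff.mpr ⟨hf, hfS⟩)
  omega

theorem mem_of_adj (hG : G.Connected) (hS : IsBalanced G S) (huv : s(u, v) ∈ S)
    (h : edgeTransmission G v - edgeTransmission G u = #G.edgeFinset - #S) {y : V}
    (hvy : G.Adj v y) : s(v, y) ∈ S := by
  by_contra hnot
  have dist_eq := hS.eDist_eq_add_one hG huv h (mem_edgeFinset.mpr hvy) hnot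
  rw [(eDist_eq_zero_iff hG).mpr (Sym2.mem_mk_left v y)] at dist_eq
  omega

theorem sqImbalance_le (hG : G.Connected) (hS : IsBalanced G S) {e : Sym2 V} (he : e ∈ S) :
    sqImbalance G e ≤ (#G.edgeFinset - #S) ^ 2 := by
  induction e with | h u v =>
  have le_left := hS.edgeTransmission_sub_le hG he
  have le_right := hS.edgeTransmission_sub_le hG (Sym2.eq_swap ▸ he)
  exact sq_le_sq' (by linarith) le_right

end IsBalanced

end Balanced

section EndClique

variable (G) in
/-- A clique is an end clique if at most one of its vertices (the attachment `c`) has neighbours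
outside it; for a block that is a clique, this says that it is an end block. -/
def IsEndClique (B : Finset V) : Prop :=
  G.IsClique B ∧ ∃ c, ∀ x ∈ B, x ≠ c → ∀ y, G.Adj x y → y ∈ B

variable [Fintype V]

theorem deficit_nonneg (hG : G.Connected) {e : Sym2 V} (he : e ∈ G.edgeFinset) :
    0 ≤ deficit G e := by
  simpa only [deficit, sub_nonneg, card_singleton, Nat.cast_one] using
    (isBalanced_singleton hG he).sqImbalance_le hG (mem_singleton_self e)

theorem isEndClique_of_deficit_eq_zero (hG : G.Connected) {e : Sym2 V} (he : e ∈ G.edgeFinset)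
    (h : deficit G e = 0) : IsEndClique G e.toFinset := by
  have isEndClique_of_sub_eq {u v : V} (huv : s(u, v) ∈ G.edgeFinset)
      (h : edgeTransmission G v - edgeTransmission G u = #G.edgeFinset - 1) :
      IsEndClique G s(u, v).toFinset := by
    refine ⟨?_, u, fun x hx hxu y hxy => ?_⟩
    · simpa only [Sym2.toFinset_mk_eq, coe_pair] using
        isClique_pair.mpr fun _ => mem_edgeFinset.mp huv
    · obtain rfl : x = v := (Sym2.mem_iff.mp (Sym2.mem_toFinset.mp hx)).resolve_left hxu
      have := (isBalanced_singleton hG huv).mem_of_adj hG (mem_singleton_self _)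
        (by simpa using h) hxy
      rw [Sym2.mem_toFinset, ← mem_singleton.mp this]
      exact Sym2.mem_mk_right x y
  induction e with | h u v =>
  rw [deficit, sqImbalance_mk, sub_eq_zero, eq_comm, sq_eq_sq_iff_eq_or_eq_neg] at h
  rcases h with h | h
  · rw [Sym2.eq_swap]
    exact isEndClique_of_sub_eq (Sym2.eq_swap ▸ he) h
  · exact isEndClique_of_sub_eq he (by linarith)

end EndClique

section Triangle

/-- The edge set of the triangle with vertices `a`, `b` and `c`. -/
noncomputable def triangleEdges (a b c : V) : Finset (Sym2 V) := {s(a, b), s(b, c), s(c, a)}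

theorem mem_triangleEdges {a b c : V} {e : Sym2 V} :
    e ∈ triangleEdges a b c ↔ e = s(a, b) ∨ e = s(b, c) ∨ e = s(c, a) := by
  simp only [triangleEdges, mem_insert, mem_singleton]

theorem mk_mem_triangleEdges {a b c x y : V} : s(x, y) ∈ triangleEdges a b c ↔
    x = a ∧ y = b ∨ x = b ∧ y = a ∨ x = b ∧ y = c ∨ x = c ∧ y = b ∨ x = c ∧ y = a ∨
      x = a ∧ y = c := by
  simp only [mem_triangleEdges, Sym2.eq_iff, or_assoc]

theorem triangleEdges_rotate (a b c : V) : triangleEdges b c a = triangleEdges a b c := by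
  ext e
  simp only [mem_triangleEdges]
  tauto

theorem triangleEdges_swap (a b c : V) : triangleEdges b a c = triangleEdges a b c := by
  ext e
  simp only [mem_triangleEdges, Sym2.eq_swap (a := b) (b := a), Sym2.eq_swap (a := a) (b := c),
    Sym2.eq_swap (a := c) (b := b)]
  tauto

theorem exists_sorted_triangleEdges {α : Type*} [LinearOrder α] (t : V → α) (a b c : V) :
    ∃ x y z, triangleEdges x y z = triangleEdges a b c ∧ t x ≤ t y ∧ t y ≤ t z := by
  wlog hab : t a ≤ t b generalizing a b
  · rw [← triangleEdges_swap a b c]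
    exact this b a (le_of_not_ge hab)
  rcases le_total (t b) (t c) with hbc | hcb
  · exact ⟨a, b, c, rfl, hab, hbc⟩
  rcases le_total (t a) (t c) with hac | hca
  · exact ⟨a, c, b, by rw [triangleEdges_rotate b a c, triangleEdges_swap], hac, hcb⟩
  · exact ⟨c, a, b, (triangleEdges_rotate c a b).symm, hca, hab⟩

theorem sum_triangleEdges {M : Type*} [AddCommMonoid M] {a b c : V} (hab : a ≠ b) (hbc : b ≠ c)
    (hca : c ≠ a) (F : Sym2 V → M) :
    ∑ e ∈ triangleEdges a b c, F e = F s(a, b) + F s(b, c) + F s(c, a) := by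
  rw [triangleEdges, sum_insert, sum_pair, add_assoc] <;> simp [hab, hbc, hca, hab.symm, hca.symm]

theorem card_triangleEdges {a b c : V} (hab : a ≠ b) (hbc : b ≠ c) (hca : c ≠ a) :
    #(triangleEdges a b c) = 3 := by
  rw [card_eq_sum_ones, sum_triangleEdges hab hbc hca]

namespace IsBalanced

variable [Fintype V] {a b c : V}

theorem adj_triangle (hS : IsBalanced G (triangleEdges a b c)) :
    G.Adj a b ∧ G.Adj b c ∧ G.Adj c a :=
  ⟨hS.adj (mem_triangleEdges.mpr (.inl rfl)), hS.adj (mem_triangleEdges.mpr (.inr (.inl rfl))),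
    hS.adj (mem_triangleEdges.mpr (.inr (.inr rfl)))⟩

theorem card_eq_three (hS : IsBalanced G (triangleEdges a b c)) : #(triangleEdges a b c) = 3 :=
  have ⟨hab, hbc, hca⟩ := hS.adj_triangle
  card_triangleEdges hab.ne hbc.ne hca.ne

theorem sum_sqImbalance_triangle (hS : IsBalanced G (triangleEdges a b c)) :
    ∑ e ∈ triangleEdges a b c, sqImbalance G e =
      2 * (edgeTransmission G c - edgeTransmission G a) ^ 2 -
        2 * ((edgeTransmission G b - edgeTransmission G a) *
          (edgeTransmission G c - edgeTransmission G b)) := by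
  obtain ⟨hab, hbc, hca⟩ := hS.adj_triangle
  simp only [sum_triangleEdges hab.ne hbc.ne hca.ne, sqImbalance_mk]
  ring

theorem isClique_triangle (hS : IsBalanced G (triangleEdges a b c)) :
    G.IsClique (({a, b, c} : Finset V) : Set V) := by
  obtain ⟨hab, hbc, hca⟩ := hS.adj_triangle
  simp [isClique_insert, hab, hbc, hca.symm]

theorem isEndClique_of_far_pair (hG : G.Connected) (hS : IsBalanced G (triangleEdges a b c))
    (hb : edgeTransmission G b - edgeTransmission G a = #G.edgeFinset - 3)
    (hc : edgeTransmission G c - edgeTransmission G a = #G.edgeFinset - 3) :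
    IsEndClique G {a, b, c} := by
  refine ⟨hS.isClique_triangle, a, fun x hx hxa y hxy => ?_⟩
  have hax : s(a, x) ∈ triangleEdges a b c := by grind [mk_mem_triangleEdges]
  have hxy_mem : s(x, y) ∈ triangleEdges a b c := by
    refine hS.mem_of_adj hG hax ?_ hxy
    rw [hS.card_eq_three]
    grind
  grind [mk_mem_triangleEdges]

theorem isEndClique_of_near_pair (hG : G.Connected) (hS : IsBalanced G (triangleEdges a b c))
    (ha : edgeTransmission G c - edgeTransmission G a = #G.edgeFinset - 3)
    (hb : edgeTransmission G c - edgeTransmission G b = #G.edgeFinset - 3) :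
    IsEndClique G {a, b, c} := by
  refine ⟨hS.isClique_triangle, b, fun x hx hxb y hxy => ?_⟩
  have hac : s(a, c) ∈ triangleEdges a b c := by grind [mk_mem_triangleEdges]
  have hbc : s(b, c) ∈ triangleEdges a b c := by grind [mk_mem_triangleEdges]
  have card_eq : (#G.edgeFinset : ℤ) - #(triangleEdges a b c) = #G.edgeFinset - 3 := by
    rw [hS.card_eq_three, Nat.cast_ofNat]
  rw [← card_eq] at ha hb
  have hxy_mem : s(x, y) ∈ triangleEdges a b c := by
    obtain rfl | rfl : x = a ∨ x = c := by grind
    · by_contra hnot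
      -- An outside edge at `a` is as close to `b` as it is to `a`, so it also contains `b`.
      have hxy_edge : s(x, y) ∈ G.edgeFinset := mem_edgeFinset.mpr hxy
      have dist_a := hS.eDist_eq_add_one hG hac ha hxy_edge hnot
      have dist_b := hS.eDist_eq_add_one hG hbc hb hxy_edge hnot
      have hx_zero := (eDist_eq_zero_iff hG).mpr (Sym2.mem_mk_left x y)
      have hb_mem : b ∈ s(x, y) := (eDist_eq_zero_iff hG).mp (by omega)
      grind [mk_mem_triangleEdges]
    · exact hS.mem_of_adj hG hac ha hxy
  grind [mk_mem_triangleEdges]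

theorem edgeTransmission_sub_le_triangle (hG : G.Connected)
    (hS : IsBalanced G (triangleEdges a b c)) :
    edgeTransmission G c - edgeTransmission G a ≤ #G.edgeFinset - 3 := by
  have hac : s(a, c) ∈ triangleEdges a b c := by grind [mk_mem_triangleEdges]
  simpa only [hS.card_eq_three, Nat.cast_ofNat] using hS.edgeTransmission_sub_le hG hac

theorem sum_sqImbalance_triangle_le (hG : G.Connected)
    (hS : IsBalanced G (triangleEdges a b c)) :
    ∑ e ∈ triangleEdges a b c, sqImbalance G e ≤ 2 * (#G.edgeFinset - 3) ^ 2 := by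
  obtain ⟨x, y, z, hxyz, hxy, hyz⟩ := exists_sorted_triangleEdges (edgeTransmission G) a b c
  rw [← hxyz] at hS ⊢
  rw [hS.sum_sqImbalance_triangle]
  have range_le := hS.edgeTransmission_sub_le_triangle hG
  nlinarith [mul_nonneg (sub_nonneg.mpr hxy) (sub_nonneg.mpr hyz)]

theorem exists_isEndClique_of_sum_sqImbalance_triangle_eq (hG : G.Connected)
    (hS : IsBalanced G (triangleEdges a b c))
    (h : ∑ e ∈ triangleEdges a b c, sqImbalance G e = 2 * (#G.edgeFinset - 3) ^ 2) :
    ∃ B, IsEndClique G B ∧ ∀ e ∈ triangleEdges a b c, ∀ x ∈ e, x ∈ B := by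
  obtain ⟨x, y, z, hxyz, hxy, hyz⟩ := exists_sorted_triangleEdges (edgeTransmission G) a b c
  rw [← hxyz] at hS h ⊢
  refine ⟨{x, y, z}, ?_, fun e he w hw => ?_⟩
  swap
  · rcases mem_triangleEdges.mp he with rfl | rfl | rfl <;> grind
  rw [hS.sum_sqImbalance_triangle] at h
  have range_le := hS.edgeTransmission_sub_le_triangle hG
  have prod_nonneg := mul_nonneg (sub_nonneg.mpr hxy) (sub_nonneg.mpr hyz)
  have range_eq : edgeTransmission G z - edgeTransmission G x = #G.edgeFinset - 3 := by nlinarith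
  have prod_eq_zero : (edgeTransmission G y - edgeTransmission G x) *
      (edgeTransmission G z - edgeTransmission G y) = 0 := by rw [range_eq] at h; linarith
  rcases mul_eq_zero.mp prod_eq_zero with hyx | hzy
  · exact hS.isEndClique_of_near_pair hG range_eq (by linarith)
  · exact hS.isEndClique_of_far_pair hG (by linarith) range_eq

end IsBalanced

end Triangle

section CycleEdgeSet

variable {S : Finset (Sym2 V)} {e : Sym2 V}

variable (G) in
/-- `S` is the edge set of a cycle of `G`. Cycles are identified with their edge sets, so that a
cycle is not counted once for each starting point and orientation. -/
def IsCycleEdgeSet (S : Finset (Sym2 V)) : Prop :=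
  ∃ (a : V) (p : G.Walk a a), p.IsCycle ∧ p.edges.toFinset = S

namespace IsCycleEdgeSet

theorem mono {H : SimpleGraph V} (hGH : G ≤ H) (hS : IsCycleEdgeSet G S) : IsCycleEdgeSet H S := by
  obtain ⟨a, p, hp, rfl⟩ := hS
  exact ⟨a, p.mapLe hGH, hp.mapLe hGH, by rw [Walk.edges_mapLe_eq_edges]⟩

theorem mem_edgeSet (hS : IsCycleEdgeSet G S) (he : e ∈ S) : e ∈ G.edgeSet := by
  obtain ⟨a, p, -, rfl⟩ := hS
  exact p.edges_subset_edgeSet (List.mem_toFinset.mp he)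

theorem three_le_card (hS : IsCycleEdgeSet G S) : 3 ≤ #S := by
  obtain ⟨a, p, hp, rfl⟩ := hS
  rw [List.toFinset_card_of_nodup hp.edges_nodup, p.length_edges]
  exact hp.three_le_length

theorem nonempty (hS : IsCycleEdgeSet G S) : S.Nonempty :=
  card_pos.mp (Nat.zero_lt_of_lt hS.three_le_card)

theorem not_isBridge (hS : IsCycleEdgeSet G S) (he : e ∈ S) : ¬G.IsBridge e := by
  obtain ⟨a, p, hp, rfl⟩ := hS
  exact fun hbridge => hbridge.notMem_edges_of_isCycle hp (List.mem_toFinset.mp he)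

theorem eq_triangleEdges (hS : IsCycleEdgeSet G S) (h : #S = 3) :
    ∃ a b c, S = triangleEdges a b c := by
  obtain ⟨a, p, hp, rfl⟩ := hS
  rw [List.toFinset_card_of_nodup hp.edges_nodup, p.length_edges] at h
  match p, h with
  | .cons (v := b) _ (.cons (v := c) _ (.cons _ .nil)), _ =>
    exact ⟨a, b, c, by simp [triangleEdges]⟩

end IsCycleEdgeSet

theorem isCycleEdgeSet_triangleEdges {a b c : V} (hab : G.Adj a b) (hbc : G.Adj b c)
    (hca : G.Adj c a) : IsCycleEdgeSet G (triangleEdges a b c) := by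
  refine ⟨a, .cons hab (.cons hbc (.cons hca .nil)), ?_, by simp [triangleEdges]⟩
  rw [Walk.cons_isCycle_iff]
  simp [Walk.cons_isPath_iff, hab.ne, hab.ne', hbc.ne, hca.ne, hca.ne']

theorem isCycleEdgeSet_deleteEdges_singleton :
    IsCycleEdgeSet (G.deleteEdges {e}) S ↔ IsCycleEdgeSet G S ∧ e ∉ S := by
  refine ⟨fun hS => ⟨hS.mono (G.deleteEdges_le _), fun he => ?_⟩, fun ⟨hS, he⟩ => ?_⟩
  · simpa [edgeSet_deleteEdges] using hS.mem_edgeSet he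
  · obtain ⟨a, p, hp, rfl⟩ := hS
    have mem_edgeSet (f) (hf : f ∈ p.edges) : f ∈ (G.deleteEdges {e}).edgeSet := by
      rw [edgeSet_deleteEdges]
      exact ⟨p.edges_subset_edgeSet hf, fun hfe => he (hfe ▸ List.mem_toFinset.mpr hf)⟩
    exact ⟨a, p.transfer _ mem_edgeSet, hp.transfer mem_edgeSet, by rw [Walk.edges_transfer]⟩

theorem card_edgeFinset_deleteEdges_add_one [Fintype G.edgeSet]
    [Fintype (G.deleteEdges {e}).edgeSet] (he : e ∈ G.edgeSet) :
    #(G.deleteEdges {e}).edgeFinset + 1 = #G.edgeFinset := by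
  rw [← card_erase_add_one (mem_edgeFinset.mpr he)]
  congr 2
  ext f
  simp [edgeSet_deleteEdges, and_comm]

variable [Fintype V]

variable (G) in
/-- The edge sets of the cycles of `G`. -/
noncomputable def cycleEdgeSets : Finset (Finset (Sym2 V)) := {S | IsCycleEdgeSet G S}

theorem mem_cycleEdgeSets : S ∈ cycleEdgeSets G ↔ IsCycleEdgeSet G S := by
  simp only [cycleEdgeSets, mem_filter_univ]

theorem IsCycleEdgeSet.subset_edgeFinset (hS : IsCycleEdgeSet G S) : S ⊆ G.edgeFinset :=
  fun _ he => mem_edgeFinset.mpr (hS.mem_edgeSet he)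

end CycleEdgeSet

namespace IsCactus

variable {S T : Finset (Sym2 V)} {e : Sym2 V}

theorem connected (hG : IsCactus G) : G.Connected := hG.1

theorem cycleEdgeSet_eq (hG : IsCactus G) (hS : IsCycleEdgeSet G S) (hT : IsCycleEdgeSet G T)
    (heS : e ∈ S) (heT : e ∈ T) : S = T := by
  obtain ⟨a, p, hp, rfl⟩ := hS
  obtain ⟨b, q, hq, rfl⟩ := hT
  by_contra hne
  induction e with | h x y =>
  rw [List.mem_toFinset] at heS heT
  refine (p.adj_of_mem_edges heS).ne (card_le_one.mp (hG.2 p q hp hq hne) x ?_ y ?_)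
  · simp [p.fst_mem_support_of_mem_edges heS, q.fst_mem_support_of_mem_edges heT]
  · simp [p.snd_mem_support_of_mem_edges heS, q.snd_mem_support_of_mem_edges heT]

theorem connected_deleteEdges (hG : IsCactus G) (hS : IsCycleEdgeSet G S) (he : e ∈ S) :
    (G.deleteEdges {e}).Connected := by
  induction e with | h x y =>
  exact hG.connected.connected_delete_edge_of_not_isBridge (hS.not_isBridge he)

theorem deleteEdges (hG : IsCactus G) (hS : IsCycleEdgeSet G S) (he : e ∈ S) :
    IsCactus (G.deleteEdges {e}) := by
  refine ⟨hG.connected_deleteEdges hS he, fun a b p q hp hq => ?_⟩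
  have hle := G.deleteEdges_le {e}
  simpa only [Walk.edges_mapLe_eq_edges, Walk.support_mapLe_eq_support] using
    hG.2 (p.mapLe hle) (q.mapLe hle) (hp.mapLe hle) (hq.mapLe hle)

theorem cycleEdgeSets_deleteEdges [Fintype V] (hG : IsCactus G) (hS : IsCycleEdgeSet G S)
    (he : e ∈ S) : cycleEdgeSets (G.deleteEdges {e}) = (cycleEdgeSets G).erase S := by
  ext T
  rw [mem_erase, mem_cycleEdgeSets, mem_cycleEdgeSets, isCycleEdgeSet_deleteEdges_singleton]
  refine ⟨fun ⟨hT, heT⟩ => ⟨fun hTS => heT (hTS ▸ he), hT⟩, fun ⟨hne, hT⟩ => ⟨hT, fun heT => ?_⟩⟩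
  exact hne (hG.cycleEdgeSet_eq hT hS heT he)

theorem card_cycleEdgeSets_add_card [Fintype V] (hG : IsCactus G) :
    #(cycleEdgeSets G) + Fintype.card V = #G.edgeFinset + 1 := by
  induction hk : #(cycleEdgeSets G) generalizing G with
  | zero =>
    have acyclic : G.IsAcyclic := fun a p hp => by
      rw [card_eq_zero] at hk
      exact notMem_empty _ (hk ▸ mem_cycleEdgeSets.mpr ⟨a, p, hp, rfl⟩)
    rw [zero_add, IsTree.card_edgeFinset ⟨hG.connected, acyclic⟩]
  | succ k ih =>
    obtain ⟨S, hS⟩ := card_pos.mp (hk.ge.trans_lt' k.succ_pos)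
    have hS' := mem_cycleEdgeSets.mp hS
    obtain ⟨e, he⟩ := hS'.nonempty
    have card_delete : #(cycleEdgeSets (G.deleteEdges {e})) = k := by
      rw [hG.cycleEdgeSets_deleteEdges hS' he, card_erase_of_mem hS, hk, Nat.add_sub_cancel]
    have ih_delete : k + Fintype.card V = #G.edgeFinset := by
      convert ih (hG.deleteEdges hS' he) card_delete using 1
      convert (card_edgeFinset_deleteEdges_add_one (hS'.mem_edgeSet he)).symm
    omega

end IsCactus

section Distance

theorem le_add_length_of_le_add_one {f : V → ℕ} (hf : ∀ a b, G.Adj a b → f a ≤ f b + 1) {x y : V}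
    (p : G.Walk x y) : f x ≤ f y + p.length := by
  induction p with
  | nil => exact Nat.le_add_right _ _
  | cons h q ih =>
    have := hf _ _ h
    rw [Walk.length_cons]
    omega

theorem dist_getVert_left {p : G.Walk u v} (hp : p.length = G.dist u v) {i : ℕ}
    (hi : i ≤ p.length) : G.dist (p.getVert i) u = i := by
  rw [dist_comm, ← length_eq_dist_of_subwalk hp (p.isSubwalk_take i), Walk.take_length,
    min_eq_left hi]

theorem dist_getVert_right {p : G.Walk u v} (hp : p.length = G.dist u v) (i : ℕ) :
    G.dist (p.getVert i) v = p.length - i := by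
  rw [← length_eq_dist_of_subwalk hp (p.isSubwalk_drop i), Walk.drop_length]

theorem dist_eq_min_deleteEdges (huv : G.Adj u v) (hdel : (G.deleteEdges {s(u, v)}).Connected)
    (x : V) : G.dist x v =
      min ((G.deleteEdges {s(u, v)}).dist x v) ((G.deleteEdges {s(u, v)}).dist x u + 1) := by
  set H := G.deleteEdges {s(u, v)} with hH
  have hG : G.Connected := hdel.mono (G.deleteEdges_le _)
  apply le_antisymm
  · have dist_le (w : V) : G.dist x w ≤ H.dist x w :=
      (hdel x w).dist_anti (G.deleteEdges_le _)
    have := hG.dist_triangle (u := x) (v := u) (w := v)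
    rw [dist_eq_one_iff_adj.mpr huv] at this
    have := dist_le u
    have := dist_le v
    omega
  · obtain ⟨p, hp⟩ := hG.exists_walk_length_eq_dist x v
    have le_add_length := le_add_length_of_le_add_one
      (f := fun z => min (H.dist z v) (H.dist z u + 1)) (fun a b hab => ?_) p
    · simpa [hp] using le_add_length
    by_cases he : s(a, b) = s(u, v)
    · rcases Sym2.eq_iff.mp he with ⟨rfl, rfl⟩ | ⟨rfl, rfl⟩ <;> simp
    · have hab' : H.Adj a b := deleteEdges_adj.mpr ⟨hab, he⟩
      have dist_le (w : V) : H.dist a w ≤ H.dist b w + 1 := by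
        have := hdel.dist_triangle (u := a) (v := b) (w := w)
        rw [dist_eq_one_iff_adj.mpr hab'] at this
        omega
      have := dist_le u
      have := dist_le v
      omega

theorem sum_edges_map_eq_sum_range {M : Type*} [AddCommMonoid M] (p : G.Walk u v) (F : Sym2 V → M) :
    (p.edges.map F).sum = ∑ i ∈ range p.length, F s(p.getVert i, p.getVert (i + 1)) := by
  induction p with
  | nil => rfl
  | cons h q ih =>
    rw [Walk.edges_cons, List.map_cons, List.sum_cons, ih, Walk.length_cons, sum_range_succ',
      add_comm]
    simp [Walk.getVert_cons_succ]

theorem sum_eDist_edges_eq (huv : G.Adj u v) (hdel : (G.deleteEdges {s(u, v)}).Connected)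
    {p : (G.deleteEdges {s(u, v)}).Walk u v}
    (hp : p.length = (G.deleteEdges {s(u, v)}).dist u v) :
    (p.edges.map (eDist G · u)).sum = (p.edges.map (eDist G · v)).sum := by
  have dist_left {i : ℕ} (hi : i ≤ p.length) :
      G.dist (p.getVert i) u = min i (p.length - i + 1) := by
    rw [dist_eq_min_deleteEdges huv.symm (Sym2.eq_swap ▸ hdel), Sym2.eq_swap,
      dist_getVert_left hp hi, dist_getVert_right hp i]
  have dist_right {i : ℕ} (hi : i ≤ p.length) :
      G.dist (p.getVert i) v = min (p.length - i) (i + 1) := by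
    rw [dist_eq_min_deleteEdges huv hdel, dist_getVert_left hp hi, dist_getVert_right hp i]
  -- Traversing `p` backwards exchanges its two ends.
  rw [sum_edges_map_eq_sum_range, sum_edges_map_eq_sum_range, ← sum_range_reflect]
  refine sum_congr rfl fun i hi => ?_
  rw [mem_range] at hi
  rw [eDist_mk, eDist_mk, dist_left (by omega), dist_left (by omega), dist_right (by omega),
    dist_right (by omega)]
  omega

theorem IsCactus.isBalanced [Fintype V] {S : Finset (Sym2 V)} (hG : IsCactus G)
    (hS : IsCycleEdgeSet G S) : IsBalanced G S where
  subset_edgeFinset := hS.subset_edgeFinset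
  sum_eDist_eq u v huv := by
    have hadj : G.Adj u v := hS.mem_edgeSet huv
    have hdel := hG.connected_deleteEdges hS huv
    obtain ⟨p, hp, hlength⟩ := hdel.exists_path_of_dist u v
    have hnot : s(v, u) ∉ p.edges := fun h => by
      simpa [Sym2.eq_swap] using p.edges_subset_edgeSet h
    have hcycle : (Walk.cons hadj.symm (p.mapLe (G.deleteEdges_le _))).IsCycle := by
      rw [Walk.cons_isCycle_iff, Walk.edges_mapLe_eq_edges]
      exact ⟨hp.mapLe _, hnot⟩
    have hS_eq : S = insert s(v, u) p.edges.toFinset := by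
      simpa using hG.cycleEdgeSet_eq hS ⟨_, _, hcycle, rfl⟩ huv (by simp [Sym2.eq_swap])
    have eDist_eq_zero {w : V} (hw : w ∈ s(v, u)) : eDist G s(v, u) w = 0 :=
      (eDist_eq_zero_iff hG.connected).mpr hw
    simp only [hS_eq, sum_insert (mt List.mem_toFinset.mp hnot),
      List.sum_toFinset _ hp.isTrail.edges_nodup, sum_eDist_edges_eq hadj hdel hlength,
      eDist_eq_zero (Sym2.mem_mk_left v u), eDist_eq_zero (Sym2.mem_mk_right v u)]

end Distance

section LowerBound

variable [Fintype V] {S : Finset (Sym2 V)}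

theorem quadratic_lt_mul_of_four_le {m r : ℤ} (hr : 4 ≤ r) (hrm : r ≤ m) (hm : m < 15) :
    m ^ 2 + 6 * m - 15 < r * ((m - 1) ^ 2 - (m - r) ^ 2) := by
  have factor_nonneg : 0 ≤ 2 * m * (r + 3) - r ^ 2 - 4 * r - 15 := by nlinarith
  calc m ^ 2 + 6 * m - 15
    _ < m ^ 2 + 6 * m - 15 + (m - 3) * (15 - m) := by
      linarith [mul_pos (show 0 < m - 3 by linarith) (show 0 < 15 - m by linarith)]
    _ ≤ m ^ 2 + 6 * m - 15 + (m - 3) * (15 - m) +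
        (r - 4) * (2 * m * (r + 3) - r ^ 2 - 4 * r - 15) :=
      le_add_of_nonneg_right (mul_nonneg (by linarith) factor_nonneg)
    _ = r * ((m - 1) ^ 2 - (m - r) ^ 2) := by ring

namespace IsBalanced

theorem lt_sum_deficit_of_four_le_card (hG : G.Connected) (hS : IsBalanced G S) (hcard : 4 ≤ #S)
    (hm : #G.edgeFinset < 15) :
    (#G.edgeFinset : ℤ) ^ 2 + 6 * #G.edgeFinset - 15 < ∑ e ∈ S, deficit G e := by
  calc (#G.edgeFinset : ℤ) ^ 2 + 6 * #G.edgeFinset - 15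
    _ < #S * ((#G.edgeFinset - 1) ^ 2 - (#G.edgeFinset - #S) ^ 2) :=
      quadratic_lt_mul_of_four_le (mod_cast hcard) (mod_cast card_le_card hS.subset_edgeFinset)
        (mod_cast hm)
    _ = ∑ e ∈ S, (((#G.edgeFinset : ℤ) - 1) ^ 2 - (#G.edgeFinset - #S) ^ 2) := by
      rw [sum_const, nsmul_eq_mul]
    _ ≤ ∑ e ∈ S, deficit G e :=
      sum_le_sum fun e he => sub_le_sub_left (hS.sqImbalance_le hG he) _

theorem sum_deficit_triangle {a b c : V} (hS : IsBalanced G (triangleEdges a b c)) :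
    ∑ e ∈ triangleEdges a b c, deficit G e =
      3 * (#G.edgeFinset - 1) ^ 2 - ∑ e ∈ triangleEdges a b c, sqImbalance G e := by
  simp only [deficit, sum_sub_distrib, sum_const, nsmul_eq_mul, hS.card_eq_three, Nat.cast_ofNat]

end IsBalanced

namespace IsCactus

theorem le_sum_deficit_cycle (hG : IsCactus G) (hm : #G.edgeFinset < 15)
    (hS : IsCycleEdgeSet G S) :
    (#G.edgeFinset : ℤ) ^ 2 + 6 * #G.edgeFinset - 15 ≤ ∑ e ∈ S, deficit G e := by
  have hbal := hG.isBalanced hS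
  rcases hS.three_le_card.eq_or_lt' with hcard | hcard
  · obtain ⟨a, b, c, rfl⟩ := hS.eq_triangleEdges hcard
    rw [hbal.sum_deficit_triangle]
    linarith [hbal.sum_sqImbalance_triangle_le hG.connected]
  · exact (hbal.lt_sum_deficit_of_four_le_card hG.connected hcard hm).le

theorem exists_isEndClique_of_sum_deficit_cycle_eq (hG : IsCactus G) (hm : #G.edgeFinset < 15)
    (hS : IsCycleEdgeSet G S)
    (h : ∑ e ∈ S, deficit G e = (#G.edgeFinset : ℤ) ^ 2 + 6 * #G.edgeFinset - 15) :
    ∃ B, IsEndClique G B ∧ ∀ e ∈ S, ∀ x ∈ e, x ∈ B := by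
  have hbal := hG.isBalanced hS
  rcases hS.three_le_card.eq_or_lt' with hcard | hcard
  · obtain ⟨a, b, c, rfl⟩ := hS.eq_triangleEdges hcard
    rw [hbal.sum_deficit_triangle] at h
    exact hbal.exists_isEndClique_of_sum_sqImbalance_triangle_eq hG.connected (by linarith)
  · exact absurd h (hbal.lt_sum_deficit_of_four_le_card hG.connected hcard hm).ne'

theorem sum_edgeFinset_eq {M : Type*} [AddCommMonoid M] (hG : IsCactus G) (F : Sym2 V → M) :
    ∑ e ∈ G.edgeFinset, F e = ∑ e ∈ G.edgeFinset \ (cycleEdgeSets G).biUnion id, F e +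
      ∑ S ∈ cycleEdgeSets G, ∑ e ∈ S, F e := by
  have disjoint : (cycleEdgeSets G : Set (Finset (Sym2 V))).PairwiseDisjoint id :=
    fun S hS T hT hne => disjoint_left.mpr fun _ heS heT => hne <|
      hG.cycleEdgeSet_eq (mem_cycleEdgeSets.mp hS) (mem_cycleEdgeSets.mp hT) heS heT
  have subset : (cycleEdgeSets G).biUnion id ⊆ G.edgeFinset :=
    biUnion_subset.mpr fun S hS => (mem_cycleEdgeSets.mp hS).subset_edgeFinset
  rw [← sum_sdiff subset, sum_biUnion disjoint]
  rfl

theorem card_mul_le_sum_deficit (hG : IsCactus G) (hm : #G.edgeFinset < 15) :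
    #(cycleEdgeSets G) * ((#G.edgeFinset : ℤ) ^ 2 + 6 * #G.edgeFinset - 15) ≤
      ∑ e ∈ G.edgeFinset, deficit G e := by
  rw [hG.sum_edgeFinset_eq, ← nsmul_eq_mul]
  exact le_add_of_nonneg_of_le
    (sum_nonneg fun e he => deficit_nonneg hG.connected (mem_sdiff.mp he).1)
    (card_nsmul_le_sum _ _ _ fun S hS => hG.le_sum_deficit_cycle hm (mem_cycleEdgeSets.mp hS))

theorem exists_isEndClique_of_sum_deficit_eq (hG : IsCactus G) (hm : #G.edgeFinset < 15)
    (h : ∑ e ∈ G.edgeFinset, deficit G e =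
      #(cycleEdgeSets G) * ((#G.edgeFinset : ℤ) ^ 2 + 6 * #G.edgeFinset - 15)) (huv : G.Adj u v) :
    ∃ B, IsEndClique G B ∧ u ∈ B ∧ v ∈ B := by
  have deficit_nonneg (e) (he : e ∈ G.edgeFinset \ (cycleEdgeSets G).biUnion id) :
      0 ≤ deficit G e := deficit_nonneg hG.connected (mem_sdiff.mp he).1
  have le_sum_deficit (S) (hS : S ∈ cycleEdgeSets G) :=
    hG.le_sum_deficit_cycle hm (mem_cycleEdgeSets.mp hS)
  have sum_le := sum_le_sum le_sum_deficit
  rw [hG.sum_edgeFinset_eq, ← nsmul_eq_mul, ← sum_const] at h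
  have huv_edge : s(u, v) ∈ G.edgeFinset := mem_edgeFinset.mpr huv
  by_cases hcycle : s(u, v) ∈ (cycleEdgeSets G).biUnion id
  · obtain ⟨S, hS, heS⟩ := mem_biUnion.mp hcycle
    have sum_eq := (sum_eq_sum_iff_of_le le_sum_deficit).mp
      (sum_le.antisymm (by linarith [sum_nonneg deficit_nonneg])) S hS
    obtain ⟨B, hB, mem_B⟩ :=
      hG.exists_isEndClique_of_sum_deficit_cycle_eq hm (mem_cycleEdgeSets.mp hS) sum_eq.symm
    exact ⟨B, hB, mem_B _ heS u (Sym2.mem_mk_left u v), mem_B _ heS v (Sym2.mem_mk_right u v)⟩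
  · have deficit_eq := (sum_eq_zero_iff_of_nonneg deficit_nonneg).mp
      ((by linarith : _ ≤ (0 : ℤ)).antisymm (sum_nonneg deficit_nonneg)) s(u, v)
      (mem_sdiff.mpr ⟨huv_edge, hcycle⟩)
    exact ⟨_, isEndClique_of_deficit_eq_zero hG.connected huv_edge deficit_eq, by simp, by simp⟩

end IsCactus

end LowerBound

section Hub

variable {h : V}

theorem eDist_le_one_of_isUniversal (hG : G.Connected) (hh : G.IsUniversal h) (f : Sym2 V) :
    eDist G f h ≤ 1 := by
  induction f with | h a b =>
  refine (eDist_le_one_iff hG).mpr ⟨a, Sym2.mem_mk_left a b, ?_⟩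
  exact or_iff_not_imp_left.mpr fun ha => (hh (Ne.symm ha)).symm

theorem adj_of_isEndClique_of_degree_le [Fintype V] {B : Finset V} {x y : V} (hB : IsEndClique G B)
    (hhB : h ∈ B) (hxB : x ∈ B) (hhx : G.Adj h x) (hxy : G.Adj x y) (hyh : y ≠ h)
    (hdeg : G.degree x ≤ G.degree h) : G.Adj h y := by
  obtain ⟨hclique, c, hc⟩ := hB
  by_contra hnot
  have hyB : y ∉ B := fun hyB => hnot (hclique hhB hyB hyh.symm)
  have hxc : x = c := by_contra fun hxc => hyB (hc x hxB hxc y hxy)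
  have subset_left : G.neighborFinset h ⊆ B.erase h := fun w hw => by
    rw [mem_neighborFinset] at hw
    exact mem_erase.mpr ⟨hw.ne', hc h hhB (hxc ▸ hhx.ne) w hw⟩
  have subset_right : insert y (B.erase x) ⊆ G.neighborFinset x := by
    refine insert_subset ((G.mem_neighborFinset x y).mpr hxy) fun w hw => ?_
    obtain ⟨hwx, hwB⟩ := mem_erase.mp hw
    exact (G.mem_neighborFinset x w).mpr (hclique hxB hwB hwx.symm)
  refine hdeg.not_gt ?_
  calc G.degree h
    _ ≤ #(B.erase h) := card_le_card subset_left
    _ = #(B.erase x) := by rw [card_erase_of_mem hhB, card_erase_of_mem hxB]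
    _ < #(insert y (B.erase x)) :=
      card_lt_card (ssubset_insert fun hy => hyB (mem_of_mem_erase hy))
    _ ≤ G.degree x := card_le_card subset_right

theorem exists_isUniversal_of_forall_adj_exists_isEndClique [Finite V] (hG : G.Connected)
    (hB : ∀ ⦃u v⦄, G.Adj u v → ∃ B, IsEndClique G B ∧ u ∈ B ∧ v ∈ B) : ∃ h, G.IsUniversal h := by
  have := Fintype.ofFinite V
  have := hG.nonempty
  obtain ⟨h, -, hmax⟩ := exists_max_image univ (G.degree ·) univ_nonempty
  refine ⟨h, fun y hy => ?_⟩
  suffices key : y = h ∨ G.Adj h y from key.resolve_left hy.symm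
  induction (reachable_iff_reflTransGen h y).mp (hG h y) with
  | refl => exact .inl rfl
  | @tail x y _ hxy ih =>
    rcases eq_or_ne y h with hyh | hyh
    · exact .inl hyh
    right
    rcases eq_or_ne x h with rfl | hxh
    · exact hxy
    have hhx := (ih hxh.symm).resolve_left hxh
    obtain ⟨B, hEnd, hhB, hxB⟩ := hB hhx
    exact adj_of_isEndClique_of_degree_le hEnd hhB hxB hhx hxy hyh (hmax x (mem_univ x))

variable [Fintype V]

variable (G h) in
/-- The edges avoiding `h`. In a bundle of triangles with common vertex `h`, each triangle has
exactly one such edge. -/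
noncomputable def rimEdges : Finset (Sym2 V) := {e ∈ G.edgeFinset | h ∉ e}

variable (G h) in
/-- The ends of the edges avoiding `h`. In a bundle of triangles with common vertex `h`, these are
the vertices other than `h` that lie on a triangle. -/
noncomputable def rimVertices : Finset V := (rimEdges G h).biUnion Sym2.toFinset

theorem mem_rimEdges {e : Sym2 V} : e ∈ rimEdges G h ↔ e ∈ G.edgeSet ∧ h ∉ e := by
  rw [rimEdges, mem_filter, mem_edgeFinset]

theorem mk_mem_rimEdges {x y : V} : s(x, y) ∈ rimEdges G h ↔ G.Adj x y ∧ x ≠ h ∧ y ≠ h := by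
  simp only [mem_rimEdges, mem_edgeSet, Sym2.mem_iff, not_or, eq_comm (a := h), ne_eq]

theorem mem_rimVertices {x : V} : x ∈ rimVertices G h ↔ ∃ e ∈ rimEdges G h, x ∈ e := by
  simp only [rimVertices, mem_biUnion, Sym2.mem_toFinset]

theorem notMem_rimVertices : h ∉ rimVertices G h := fun hh =>
  have ⟨_, he, hhe⟩ := mem_rimVertices.mp hh
  (mem_rimEdges.mp he).2 hhe

theorem card_toFinset_of_mem_rimEdges {e : Sym2 V} (he : e ∈ rimEdges G h) : #e.toFinset = 2 :=
  e.card_toFinset_of_not_isDiag (G.not_isDiag_of_mem_edgeSet (mem_rimEdges.mp he).1)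

theorem adj_iff_of_isUniversal (hh : G.IsUniversal h) {x y : V} :
    G.Adj x y ↔ x ≠ y ∧ (x = h ∨ y = h ∨ ∃ e ∈ rimEdges G h, x ∈ e ∧ y ∈ e) := by
  constructor
  · refine fun hxy => ⟨hxy.ne, ?_⟩
    by_cases hxh : x = h
    · exact .inl hxh
    by_cases hyh : y = h
    · exact .inr (.inl hyh)
    exact .inr (.inr ⟨s(x, y), mk_mem_rimEdges.mpr ⟨hxy, hxh, hyh⟩, by simp, by simp⟩)
  · rintro ⟨hne, rfl | rfl | ⟨e, he, hxe, hye⟩⟩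
    · exact hh hne
    · exact (hh hne.symm).symm
    · rw [(Sym2.mem_and_mem_iff hne).mp ⟨hxe, hye⟩] at he
      exact (mk_mem_rimEdges.mp he).1

theorem sum_edgeFinset_eq_of_isUniversal {M : Type*} [AddCommMonoid M] (hh : G.IsUniversal h)
    (F : Sym2 V → M) : ∑ e ∈ G.edgeFinset, F e =
      ∑ x ∈ univ.erase h, F s(h, x) + ∑ e ∈ rimEdges G h, F e := by
  rw [← sum_filter_add_sum_filter_not G.edgeFinset (h ∈ ·), rimEdges]
  congr 1
  have filter_eq : {e ∈ G.edgeFinset | h ∈ e} = (univ.erase h).image (s(h, ·)) := by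
    ext e
    simp only [mem_filter, mem_edgeFinset, mem_image, mem_erase, mem_univ, and_true]
    constructor
    · rintro ⟨he, x, rfl⟩
      exact ⟨x, (G.ne_of_adj he).symm, rfl⟩
    · rintro ⟨x, hx, rfl⟩
      exact ⟨hh hx.symm, Sym2.mem_mk_left h x⟩
  rw [filter_eq, sum_image fun _ _ _ _ => Sym2.congr_right.mp]

theorem card_rimEdges_add_card (hh : G.IsUniversal h) :
    #(rimEdges G h) + Fintype.card V = #G.edgeFinset + 1 := by
  have card_edges := sum_edgeFinset_eq_of_isUniversal hh fun _ => 1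
  simp only [← card_eq_sum_ones] at card_edges
  rw [card_edges, add_right_comm, card_erase_add_one (mem_univ h), card_univ, add_comm]

namespace IsCactus

theorem card_rimEdges (hG : IsCactus G) (hh : G.IsUniversal h) :
    #(rimEdges G h) = #(cycleEdgeSets G) :=
  Nat.add_right_cancel ((card_rimEdges_add_card hh).trans hG.card_cycleEdgeSets_add_card.symm)

theorem rimEdge_eq (hG : IsCactus G) (hh : G.IsUniversal h) {e f : Sym2 V}
    (he : e ∈ rimEdges G h) (hf : f ∈ rimEdges G h) {x : V} (hxe : x ∈ e) (hxf : x ∈ f) :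
    e = f := by
  obtain ⟨y, rfl⟩ := hxe
  obtain ⟨z, rfl⟩ := hxf
  obtain ⟨hxy, hxh, hyh⟩ := mk_mem_rimEdges.mp he
  obtain ⟨hxz, -, hzh⟩ := mk_mem_rimEdges.mp hf
  -- The triangles `h x y` and `h x z` share the edge `h x`.
  have triangle_eq := hG.cycleEdgeSet_eq (e := s(h, x))
    (isCycleEdgeSet_triangleEdges (hh hxh.symm) hxy (hh hyh.symm).symm)
    (isCycleEdgeSet_triangleEdges (hh hxh.symm) hxz (hh hzh.symm).symm)
    (mem_triangleEdges.mpr (.inl rfl)) (mem_triangleEdges.mpr (.inl rfl))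
  have hmem : s(x, y) ∈ triangleEdges h x z :=
    triangle_eq ▸ mem_triangleEdges.mpr (.inr (.inl rfl))
  have := hxy.ne
  grind [mk_mem_triangleEdges]

theorem card_rimVertices (hG : IsCactus G) (hh : G.IsUniversal h) :
    #(rimVertices G h) = 2 * #(rimEdges G h) := by
  rw [rimVertices, card_biUnion fun e he f hf hne => disjoint_left.mpr fun x hxe hxf => hne <|
      hG.rimEdge_eq hh he hf (Sym2.mem_toFinset.mp hxe) (Sym2.mem_toFinset.mp hxf),
    sum_congr rfl fun e => card_toFinset_of_mem_rimEdges, sum_const, smul_eq_mul, mul_comm]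

theorem two_le_eDist_of_mem_rimEdges (hG : IsCactus G) (hh : G.IsUniversal h) {x : V} (hx : x ≠ h)
    {f : Sym2 V} (hf : f ∈ rimEdges G h) (hxf : x ∉ f) : 2 ≤ eDist G f x := by
  by_contra! hlt
  obtain ⟨a, haf, rfl | hax⟩ := (eDist_le_one_iff hG.connected).mp (Nat.le_of_lt_succ hlt)
  · exact hxf haf
  have hah : a ≠ h := fun hah => (mem_rimEdges.mp hf).2 (hah ▸ haf)
  have f_eq := hG.rimEdge_eq hh hf (mk_mem_rimEdges.mpr ⟨hax, hah, hx⟩) haf (Sym2.mem_mk_left a x)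
  exact hxf (f_eq ▸ Sym2.mem_mk_right a x)

theorem eDist_sub_eDist_hub (hG : IsCactus G) (hh : G.IsUniversal h) {x : V} (hx : x ≠ h)
    {f : Sym2 V} (hf : f ∈ G.edgeFinset) : (eDist G f x : ℤ) - eDist G f h =
      1 - (if f = s(h, x) then 1 else 0) - 2 * if f ∈ rimEdges G h ∧ x ∈ f then 1 else 0 := by
  have dist_le := eDist_le_add_one hG.connected (hh hx.symm) f
  have dist_hub := eDist_eq_zero_iff hG.connected (f := f) (w := h)
  have dist_x := eDist_eq_zero_iff hG.connected (f := f) (w := x)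
  have dist_hub_le := eDist_le_one_of_isUniversal hG.connected hh f
  simp only [← Sym2.mem_and_mem_iff hx.symm]
  by_cases hhf : h ∈ f
  · have hrim : f ∉ rimEdges G h := fun hrim => (mem_rimEdges.mp hrim).2 hhf
    by_cases hxf : x ∈ f <;> simp only [hhf, hxf, hrim] <;> grind
  · have hrim : f ∈ rimEdges G h := mem_rimEdges.mpr ⟨mem_edgeFinset.mp hf, hhf⟩
    have two_le := hG.two_le_eDist_of_mem_rimEdges hh hx hrim
    by_cases hxf : x ∈ f <;> simp only [hhf, hxf, hrim] <;> grind

theorem edgeTransmission_sub_hub (hG : IsCactus G) (hh : G.IsUniversal h) {x : V} (hx : x ≠ h) :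
    edgeTransmission G x - edgeTransmission G h =
      #G.edgeFinset - 1 - 2 * if x ∈ rimVertices G h then 1 else 0 := by
  have rim_through : #{f ∈ G.edgeFinset | f ∈ rimEdges G h ∧ x ∈ f} =
      if x ∈ rimVertices G h then 1 else 0 := by
    split_ifs with hrim
    · obtain ⟨e, he, hxe⟩ := mem_rimVertices.mp hrim
      refine card_eq_one.mpr ⟨e, eq_singleton_iff_unique_mem.mpr ⟨?_, fun f hf => ?_⟩⟩
      · exact mem_filter.mpr ⟨mem_edgeFinset.mpr (mem_rimEdges.mp he).1, he, hxe⟩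
      · obtain ⟨-, hf, hxf⟩ := mem_filter.mp hf
        exact hG.rimEdge_eq hh hf he hxf hxe
    · refine card_eq_zero.mpr (filter_eq_empty_iff.mpr fun f _ hf => hrim ?_)
      exact mem_rimVertices.mpr ⟨f, hf⟩
  have hhx : s(h, x) ∈ G.edgeFinset := mem_edgeFinset.mpr (hh hx.symm)
  rw [edgeTransmission, edgeTransmission, ← sum_sub_distrib,
    sum_congr rfl fun f => hG.eDist_sub_eDist_hub hh hx, sum_sub_distrib, sum_sub_distrib,
    ← mul_sum, sum_ite_eq', if_pos hhx, sum_const, nsmul_one, ← natCast_card_filter, rim_through]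
  push_cast
  rfl

theorem deficit_hub (hG : IsCactus G) (hh : G.IsUniversal h) {x : V} (hx : x ≠ h) :
    deficit G s(h, x) = if x ∈ rimVertices G h then 4 * (#G.edgeFinset - 2 : ℤ) else 0 := by
  rw [deficit, sqImbalance_mk, sub_sq_comm (edgeTransmission G h),
    hG.edgeTransmission_sub_hub hh hx]
  split_ifs <;> ring

theorem sum_deficit_le_of_isUniversal (hG : IsCactus G) (hh : G.IsUniversal h) :
    ∑ e ∈ G.edgeFinset, deficit G e ≤
      #(cycleEdgeSets G) * ((#G.edgeFinset : ℤ) ^ 2 + 6 * #G.edgeFinset - 15) := by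
  have sum_hub : ∑ x ∈ univ.erase h, deficit G s(h, x) =
      #(rimVertices G h) * (4 * (#G.edgeFinset - 2 : ℤ)) := by
    have filter_eq : {x ∈ univ.erase h | x ∈ rimVertices G h} = rimVertices G h := by
      ext x
      simpa using fun hx => ne_of_mem_of_not_mem hx notMem_rimVertices
    rw [sum_congr rfl fun x hx => hG.deficit_hub hh (ne_of_mem_erase hx), ← sum_filter, filter_eq,
      sum_const, nsmul_eq_mul]
  have sum_rim_le : ∑ e ∈ rimEdges G h, deficit G e ≤
      #(rimEdges G h) * (#G.edgeFinset - 1 : ℤ) ^ 2 := by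
    rw [← nsmul_eq_mul]
    exact sum_le_card_nsmul _ _ _ fun e _ => sub_le_self _ (sqImbalance_nonneg e)
  rw [sum_edgeFinset_eq_of_isUniversal hh, sum_hub, hG.card_rimVertices hh, ← hG.card_rimEdges hh]
  push_cast
  linarith

theorem sum_deficit_eq_iff (hG : IsCactus G) (hm : #G.edgeFinset < 15) :
    ∑ e ∈ G.edgeFinset, deficit G e =
        #(cycleEdgeSets G) * ((#G.edgeFinset : ℤ) ^ 2 + 6 * #G.edgeFinset - 15) ↔
      ∃ h, G.IsUniversal h :=
  ⟨fun hsum => exists_isUniversal_of_forall_adj_exists_isEndClique hG.connected fun _ _ =>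
    hG.exists_isEndClique_of_sum_deficit_eq hm hsum,
  fun ⟨_, hh⟩ => (hG.sum_deficit_le_of_isUniversal hh).antisymm (hG.card_mul_le_sum_deficit hm)⟩

end IsCactus

end Hub

section Bundle

variable {k p : ℕ}

theorem bundleGraph_three_adj {x y : Unit ⊕ ((Σ _ : Fin k, Fin (3 - 1)) ⊕ Fin p)} :
    (bundleGraph k (fun _ => 3) p).Adj x y ↔ x ≠ y ∧
      (x = .inl () ∨ y = .inl () ∨ ∃ i a b, x = .inr (.inl ⟨i, a⟩) ∧ y = .inr (.inl ⟨i, b⟩)) := by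
  rw [bundleGraph, fromRel_adj]
  refine and_congr_right fun hne => ?_
  rcases x with _ | ⟨i, a⟩ | _ <;> rcases y with _ | ⟨j, b⟩ | _
  case inr.inl.inr.inl =>
    have val_ne (hij : i = j) : a.val ≠ b.val := fun hab => hne (by grind)
    suffices (i = j ∧ a.val + 1 = b.val ∨ j = i ∧ b.val + 1 = a.val) ↔ j = i by
      simpa [and_assoc] using this
    grind
  case inl.inl => exact absurd rfl hne
  case inl.inr.inl => simpa using (by omega : b.val = 0 ∨ b.val = 1)
  case inr.inl.inl => simpa using (by omega : a.val = 0 ∨ a.val = 1)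
  all_goals simp

theorem isUniversal_bundleGraph_three :
    (bundleGraph k (fun _ => 3) p).IsUniversal (.inl ()) :=
  fun _ hne => bundleGraph_three_adj.mpr ⟨hne, .inl rfl⟩

theorem exists_isUniversal_of_iso_bundleGraph (φ : G ≃g bundleGraph k (fun _ => 3) p) :
    ∃ h, G.IsUniversal h := by
  refine ⟨φ.symm (.inl ()), fun x hx => ?_⟩
  rw [← φ.map_adj_iff, φ.apply_symm_apply]
  exact isUniversal_bundleGraph_three fun h => hx (φ.symm_apply_eq.mpr h)

variable [Fintype V] {h : V}

theorem exists_bundle_equiv (hk : #(rimEdges G h) = k)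
    (hV : Fintype.card V = 2 * k + p + 1) (hverts : #(rimVertices G h) = 2 * k) :
    ∃ (φ : Unit ⊕ ((Σ _ : Fin k, Fin (3 - 1)) ⊕ Fin p) ≃ V) (e : Fin k ≃ rimEdges G h),
      φ (.inl ()) = h ∧ ∀ i x, x ∈ (e i).1 ↔ ∃ a, φ (.inr (.inl ⟨i, a⟩)) = x := by
  have card_pendant : #(insert h (rimVertices G h))ᶜ = p := by
    rw [card_compl, card_insert_of_notMem notMem_rimVertices, hV, hverts]
    omega
  let rim := ((rimEdges G h).equivFinOfCardEq hk).symm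
  let ends (i : Fin k) :=
    ((rim i).1.toFinset.equivFinOfCardEq (card_toFinset_of_mem_rimEdges (rim i).2)).symm
  let pendant := ((insert h (rimVertices G h))ᶜ.equivFinOfCardEq card_pendant).symm
  let φ : Unit ⊕ ((Σ _ : Fin k, Fin (3 - 1)) ⊕ Fin p) → V :=
    Sum.elim (fun _ => h) (Sum.elim (fun s => ends s.1 s.2) (fun j => pendant j))
  have mem_rim (i x) : x ∈ (rim i).1 ↔ ∃ a, φ (.inr (.inl ⟨i, a⟩)) = x := by
    refine ⟨fun hx => ?_, fun ⟨a, ha⟩ => ha ▸ Sym2.mem_toFinset.mp (ends i a).2⟩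
    obtain ⟨a, ha⟩ := (ends i).surjective ⟨x, Sym2.mem_toFinset.mpr hx⟩
    exact ⟨a, congrArg Subtype.val ha⟩
  have surjective : φ.Surjective := fun x => by
    by_cases hx : x ∈ insert h (rimVertices G h)
    · rcases mem_insert.mp hx with rfl | hx
      · exact ⟨.inl (), rfl⟩
      · obtain ⟨e, he, hxe⟩ := mem_rimVertices.mp hx
        obtain ⟨i, hi⟩ := rim.surjective ⟨e, he⟩
        obtain ⟨a, ha⟩ := (mem_rim i x).mp (by rwa [hi])
        exact ⟨_, ha⟩
    · obtain ⟨j, hj⟩ := pendant.surjective ⟨x, mem_compl.mpr hx⟩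
      exact ⟨.inr (.inr j), congrArg Subtype.val hj⟩
  have bijective : φ.Bijective := by
    refine (Fintype.bijective_iff_surjective_and_card φ).mpr ⟨surjective, ?_⟩
    simp only [Nat.add_one_sub_one, Fintype.card_sum, Fintype.card_unique, Fintype.card_sigma,
      Fintype.card_fin, sum_const, card_univ, smul_eq_mul, hV]
    ring
  exact ⟨.ofBijective φ bijective, rim, rfl, mem_rim⟩

theorem IsCactus.nonempty_iso_bundleGraph (hG : IsCactus G) (hh : G.IsUniversal h) :
    Nonempty (G ≃g bundleGraph #(cycleEdgeSets G) (fun _ => 3)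
      (Fintype.card V - 2 * #(cycleEdgeSets G) - 1)) := by
  have hk := hG.card_rimEdges hh
  have hverts := hG.card_rimVertices hh
  rw [hk] at hverts
  have card_lt := card_lt_univ_of_notMem (notMem_rimVertices (G := G) (h := h))
  obtain ⟨φ, e, hφ, mem_e⟩ := exists_bundle_equiv
    (p := Fintype.card V - 2 * #(cycleEdgeSets G) - 1) hk (by omega) hverts
  refine ⟨RelIso.symm ⟨φ, fun {x y} => ?_⟩⟩
  subst hφ
  rw [adj_iff_of_isUniversal hh, bundleGraph_three_adj, φ.injective.ne_iff, φ.injective.eq_iff,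
    φ.injective.eq_iff]
  refine and_congr_right fun _ => or_congr_right (or_congr_right ⟨?_, ?_⟩)
  · rintro ⟨f, hf, hx, hy⟩
    obtain ⟨i, hi⟩ := e.surjective ⟨f, hf⟩
    obtain rfl : (e i).1 = f := congrArg Subtype.val hi
    obtain ⟨a, ha⟩ := (mem_e i _).mp hx
    obtain ⟨b, hb⟩ := (mem_e i _).mp hy
    exact ⟨i, a, b, (φ.injective ha).symm, (φ.injective hb).symm⟩
  · rintro ⟨i, a, b, rfl, rfl⟩
    exact ⟨e i, (e i).2, (mem_e i _).mpr ⟨a, rfl⟩, (mem_e i _).mpr ⟨b, rfl⟩⟩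

end Bundle

end

/-- for a cactus with `k` cycles and `m < 15` edges,
`Sz*ₑ(G) ≥ (2m² − m + k((m−9)² − 36))/4 + k(6m − 15)`, with equality iff `G ≅ C₀(n,k)`,
the bundle of `k` triangles with `n − 2k − 1` pendant edges at the common vertex. -/
theorem stmt15 {V : Type*} [Fintype V] (G : SimpleGraph V) (hG : IsCactus G)
    (n k m : ℕ) (hn : Fintype.card V = n) (hm : G.edgeFinset.card = m)
    (hkm : m = n - 1 + k) (h15 : m < 15) :
    (2 * (m : ℚ) ^ 2 - m + k * (((m : ℚ) - 9) ^ 2 - 36)) / 4 + k * (6 * (m : ℚ) - 15) ≤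
      szRevE G ∧
    (szRevE G = (2 * (m : ℚ) ^ 2 - m + k * (((m : ℚ) - 9) ^ 2 - 36)) / 4 +
        k * (6 * (m : ℚ) - 15) ↔
      Nonempty (G ≃g bundleGraph k (fun _ => 3) (n - 2 * k - 1))) := by
  subst hn hm
  have := hG.connected.nonempty
  have card_pos := Fintype.card_pos (α := V)
  have card_cycles := hG.card_cycleEdgeSets_add_card
  obtain rfl : #(cycleEdgeSets G) = k := by omega
  have four_mul_eq := four_mul_szRevE hG.connected
  have sum_ge : (#(cycleEdgeSets G) * ((#G.edgeFinset : ℚ) ^ 2 + 6 * #G.edgeFinset - 15)) ≤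
      ∑ e ∈ G.edgeFinset, deficit G e := mod_cast hG.card_mul_le_sum_deficit h15
  refine ⟨by linarith, ?_⟩
  calc szRevE G = _
    _ ↔ ∑ e ∈ G.edgeFinset, deficit G e =
        #(cycleEdgeSets G) * ((#G.edgeFinset : ℤ) ^ 2 + 6 * #G.edgeFinset - 15) := by
      rw [← Int.cast_inj (α := ℚ)]
      push_cast at four_mul_eq ⊢
      constructor <;> intro <;> linarith
    _ ↔ ∃ h, G.IsUniversal h := hG.sum_deficit_eq_iff h15
    _ ↔ Nonempty (G ≃g bundleGraph _ (fun _ => 3) _) :=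
      ⟨fun ⟨_, hh⟩ => hG.nonempty_iso_bundleGraph hh,
        fun ⟨φ⟩ => exists_isUniversal_of_iso_bundleGraph φ⟩
end
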